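/- arXiv:2105.00869 — 4 statements merged into one kernel-verified Lean document; each statement's English description precedes it below -/
import Mathlib

section
/- For every real x > 0, the derivative with respect to s of the function s ↦ ∫₀^∞ cos(x·u)/(u² + 1)^{s + 1/2} du, evaluated at s = 1/2, equals ( ∫₀^∞ e^{−u}/(u + 2x) du + log x + γ − log 2 ) · (π/2)·e^{−x}, where γ is the Euler–Mascheroni constant (so that Γ'(1) = −γ). -/
open MeasureTheory Set Filter Topology
open scoped FourierTransform Real

theorem Real.integral_cos_mul_div_one_add_sq {x : ℝ} (hx : 0 ≤ x) :
    ∫ u in Ioi (0 : ℝ), cos (x * u) / (1 + u ^ 2) = π / 2 * exp (-x) := by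
  have hpi := Real.pi_pos
  set f : ℝ → ℂ := fun t => ((Real.exp (-|t|) : ℝ) : ℂ) with hf
  have hint : Integrable (fun t : ℝ => Real.exp (-|t|)) := by
    have h1 : IntegrableOn (fun t : ℝ => Real.exp (-|t|)) (Iic 0) :=
      (integrableOn_exp_Iic 0).congr_fun
        (fun t (ht : t ≤ 0) => by simp [abs_of_nonpos ht]) measurableSet_Iic
    have h2 : IntegrableOn (fun t : ℝ => Real.exp (-|t|)) (Ioi 0) :=
      (integrableOn_exp_neg_Ioi 0).congr_fun
        (fun t (ht : 0 < t) => by simp [abs_of_pos ht]) measurableSet_Ioi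
    rw [← integrableOn_univ, ← Iic_union_Ioi (a := (0 : ℝ))]
    exact h1.union h2
  have hfint : Integrable f := hint.ofReal
  have hF : 𝓕 f = fun w : ℝ => ((2 / (1 + (2 * π * w) ^ 2) : ℝ) : ℂ) := by
    ext w
    rw [Real.fourier_real_eq_integral_exp_smul]
    have hi : Integrable (fun v : ℝ => Complex.exp (↑(-2 * π * v * w) * Complex.I) • f v) := by
      refine (integrable_norm_iff (by fun_prop)).1 ?_
      simpa only [norm_smul, Complex.norm_exp_ofReal_mul_I, one_mul] using hfint.norm
    rw [← intervalIntegral.integral_Iic_add_Ioi (b := 0) hi.integrableOn hi.integrableOn]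
    have e1 : ∀ v ∈ Iic (0 : ℝ), Complex.exp (↑(-2 * π * v * w) * Complex.I) • f v
        = Complex.exp ((1 - (2 * π * w : ℝ) * Complex.I) * v) := by
      intro v hv
      simp only [hf, abs_of_nonpos (show v ≤ 0 from hv), smul_eq_mul, Complex.ofReal_exp,
        ← Complex.exp_add]
      congr 1; push_cast; ring
    have e2 : ∀ v ∈ Ioi (0 : ℝ), Complex.exp (↑(-2 * π * v * w) * Complex.I) • f v
        = Complex.exp ((-1 - (2 * π * w : ℝ) * Complex.I) * v) := by
      intro v hv
      simp only [hf, abs_of_pos (show 0 < v from hv), smul_eq_mul, Complex.ofReal_exp,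
        ← Complex.exp_add]
      congr 1; push_cast; ring
    rw [setIntegral_congr_fun measurableSet_Iic e1, setIntegral_congr_fun measurableSet_Ioi e2,
      integral_exp_mul_complex_Iic (by simp), integral_exp_mul_complex_Ioi (by simp)]
    have n1 : (1 - (2 * π * w : ℝ) * Complex.I) ≠ 0 := fun h => by
      simpa using congrArg Complex.re h
    have n2 : (-1 - (2 * π * w : ℝ) * Complex.I) ≠ 0 := fun h => by
      simpa using congrArg Complex.re h
    have n3 : ((1 + (2 * π * w : ℝ) ^ 2 : ℝ) : ℂ) ≠ 0 := by
      exact_mod_cast (by positivity : (1 + (2 * π * w : ℝ) ^ 2 : ℝ) ≠ 0)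
    simp only [Complex.ofReal_zero, mul_zero, Complex.exp_zero]
    rw [Complex.ofReal_div]
    generalize (2 * π * w : ℝ) = y at *
    rw [div_add_div _ _ n1 n2, div_eq_div_iff (mul_ne_zero n1 n2) n3]
    push_cast
    linear_combination (-2 * (y : ℂ) ^ 2) * Complex.I_sq
  have hFint : Integrable (fun w : ℝ => 2 / (1 + (2 * π * w) ^ 2)) := by
    have := (integrable_inv_one_add_sq.comp_mul_left' (R := 2 * π) (by positivity)).const_mul 2
    simpa [div_eq_mul_inv] using this
  have hinv := congrFun (Continuous.fourierInv_fourier_eq (f := f) (by fun_prop) hfint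
    (by rw [hF]; exact hFint.ofReal)) x
  rw [hF, Real.fourierInv_eq'] at hinv
  have hcos : ∫ w : ℝ, cos (x * (2 * π * w)) * (2 / (1 + (2 * π * w) ^ 2)) = exp (-x) := by
    have h := congrArg Complex.re hinv
    rw [← RCLike.re_to_complex, ← integral_re] at h
    · simp only [hf, abs_of_nonneg hx, RCLike.re_to_complex, Complex.ofReal_re] at h
      rw [← h]
      refine integral_congr_ae (ae_of_all _ fun w => ?_)
      simp only [smul_eq_mul, Complex.re_mul_ofReal, Complex.exp_ofReal_mul_I_re]
      congr 2
      simp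
      ring
    · refine (integrable_norm_iff (by fun_prop)).1 ?_
      simpa only [norm_smul, Complex.norm_exp_ofReal_mul_I, one_mul] using hFint.ofReal.norm
  have heven : ∫ w : ℝ, cos (x * (2 * π * w)) * (2 / (1 + (2 * π * w) ^ 2))
      = 2 * ∫ w in Ioi (0 : ℝ), 2 * (cos (x * (2 * π * w)) / (1 + (2 * π * w) ^ 2)) := by
    rw [← integral_comp_abs (f := fun w => 2 * (cos (x * (2 * π * w)) / (1 + (2 * π * w) ^ 2)))]
    refine integral_congr_ae (ae_of_all _ fun w => ?_)
    rcases abs_choice w with h | h <;> simp only [h, mul_neg, cos_neg, even_two.neg_pow] <;> ring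
  rw [heven, integral_const_mul,
    integral_comp_mul_left_Ioi (fun u => cos (x * u) / (1 + u ^ 2)) 0 (by positivity),
    mul_zero, smul_eq_mul] at hcos
  rw [← hcos]
  field_simp

theorem Real.integral_cos_mul_div_sq_add_sq {x b : ℝ} (hx : 0 ≤ x) (hb : 0 < b) :
    ∫ u in Ioi (0 : ℝ), cos (x * u) / (b ^ 2 + u ^ 2) = π / (2 * b) * exp (-(x * b)) := by
  have h := integral_comp_mul_left_Ioi (fun u => cos (x * u) / (b ^ 2 + u ^ 2)) 0 hb
  have h' : ∀ u : ℝ, cos (x * (b * u)) / (b ^ 2 + (b * u) ^ 2)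
      = (b ^ 2)⁻¹ * (cos (x * b * u) / (1 + u ^ 2)) := fun u => by
    field_simp
  simp_rw [h'] at h
  rw [integral_const_mul, integral_cos_mul_div_one_add_sq (by positivity), mul_zero,
    smul_eq_mul] at h
  field_simp at h ⊢
  linarith

theorem Real.integral_log_mul_exp_neg :
    ∫ t in Ioi (0 : ℝ), log t * exp (-t) = -eulerMascheroniConstant := by
  have h := Complex.hasDerivAt_GammaIntegral (s := 1) (by simp)
  have h1 : HasDerivAt Complex.Gamma
      (∫ t : ℝ in Ioi 0, (t : ℂ) ^ ((1 : ℂ) - 1) * (log t * exp (-t))) 1 := by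
    refine h.congr_of_eventuallyEq ?_
    filter_upwards [(Complex.continuous_re.isOpen_preimage _ isOpen_Ioi).mem_nhds
      (show (1 : ℂ) ∈ Complex.re ⁻¹' Ioi 0 by simp)] with s hs
    exact Complex.Gamma_eq_integral hs
  have h2 := h1.unique Complex.hasDerivAt_Gamma_one
  simp only [sub_self, Complex.cpow_zero, one_mul, ← Complex.ofReal_mul] at h2
  rw [integral_complex_ofReal] at h2
  exact_mod_cast h2

theorem Real.integrableOn_log_mul_exp_neg :
    IntegrableOn (fun t : ℝ => log t * exp (-t)) (Ioi 0) := by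
  by_contra h
  have h1 := integral_log_mul_exp_neg
  rw [integral_undef h] at h1
  linarith [one_half_lt_eulerMascheroniConstant]

theorem Real.integrableOn_mul_exp_neg_mul_log {x : ℝ} (hx : 0 < x) :
    IntegrableOn (fun v : ℝ => x * exp (-(x * v)) * log v) (Ioi 0) ∧
      ∫ v in Ioi (0 : ℝ), x * exp (-(x * v)) * log v = -eulerMascheroniConstant - log x := by
  have hg : IntegrableOn (fun t : ℝ => log t * exp (-t) - log x * exp (-t)) (Ioi 0) :=
    integrableOn_log_mul_exp_neg.sub ((integrableOn_exp_neg_Ioi 0).const_mul _)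
  have e : ∀ v ∈ Ioi (0 : ℝ), x * (log (x * v) * exp (-(x * v)) - log x * exp (-(x * v)))
      = x * exp (-(x * v)) * log v := fun v (hv : 0 < v) => by
    rw [log_mul hx.ne' hv.ne']; ring
  constructor
  · have h := (integrableOn_Ioi_comp_mul_left_iff
      (fun t : ℝ => log t * exp (-t) - log x * exp (-t)) 0 hx).2 (by simpa using hg)
    exact IntegrableOn.congr_fun (h.const_mul x) e measurableSet_Ioi
  · rw [← setIntegral_congr_fun measurableSet_Ioi e, integral_const_mul,
      integral_comp_mul_left_Ioi (fun t : ℝ => log t * exp (-t) - log x * exp (-t)) 0 hx,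
      mul_zero, smul_eq_mul, mul_inv_cancel_left₀ hx.ne',
      integral_sub integrableOn_log_mul_exp_neg ((integrableOn_exp_neg_Ioi 0).const_mul _),
      integral_log_mul_exp_neg, integral_const_mul, integral_exp_neg_Ioi_zero, mul_one]

theorem Real.abs_exp_neg_mul_sub_one_le {x v : ℝ} (hx : 0 ≤ x) (hv : 0 ≤ v) :
    |exp (-(x * v)) - 1| ≤ x * v := by
  have h := add_one_le_exp (-(x * v))
  have h' : exp (-(x * v)) ≤ 1 := exp_le_one_iff.2 (by simpa using mul_nonneg hx hv)
  rw [abs_le]; constructor <;> linarith [mul_nonneg hx hv]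

theorem Real.integrableOn_exp_neg_mul_sub_inv_div {x : ℝ} (hx : 0 < x) :
    IntegrableOn (fun v : ℝ => (exp (-(x * v)) - (1 + v)⁻¹) / v) (Ioi 0) := by
  have hm : Measurable (fun v : ℝ => (exp (-(x * v)) - (1 + v)⁻¹) / v) := by fun_prop
  rw [← Ioc_union_Ioi_eq_Ioi (zero_le_one' ℝ)]
  refine IntegrableOn.union ?_ ?_
  · refine Integrable.mono' (g := fun _ => x + 1) (by simp) hm.aestronglyMeasurable ?_
    refine (ae_restrict_iff' measurableSet_Ioc).2 (ae_of_all _ fun v hv => ?_)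
    have hv0 : 0 < v := hv.1
    have h1 := abs_le.1 (abs_exp_neg_mul_sub_one_le hx.le hv0.le)
    have h2 : 1 - (1 + v)⁻¹ ≤ v := by
      rw [sub_le_iff_le_add', ← sub_le_iff_le_add, ← one_div, le_div_iff₀ (by linarith)]
      nlinarith
    have h3 : (1 + v)⁻¹ ≤ 1 := inv_le_one_of_one_le₀ (by linarith)
    rw [norm_eq_abs, abs_div, abs_of_pos hv0, div_le_iff₀ hv0, abs_le]
    constructor <;> nlinarith
  · have h1 : IntegrableOn (fun v : ℝ => exp (-x * v)) (Ioi 1) :=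
      integrableOn_exp_mul_Ioi (by linarith) 1
    have h2 : IntegrableOn (fun v : ℝ => v ^ (-2 : ℝ)) (Ioi 1) :=
      integrableOn_Ioi_rpow_of_lt (by norm_num) one_pos
    refine Integrable.mono' (h1.add h2) hm.aestronglyMeasurable ?_
    refine (ae_restrict_iff' measurableSet_Ioi).2 (ae_of_all _ fun v (hv : 1 < v) => ?_)
    have hv0 : 0 < v := by linarith
    rw [sub_div]
    refine (norm_sub_le _ _).trans (add_le_add ?_ ?_)
    · simp only [norm_of_nonneg (show 0 ≤ exp (-(x * v)) / v by positivity), neg_mul]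
      exact div_le_self (exp_pos _).le hv.le
    · beta_reduce
      rw [norm_of_nonneg (by positivity), rpow_neg hv0.le, rpow_two, div_eq_mul_inv, ← mul_inv]
      gcongr
      nlinarith

theorem Real.integral_exp_neg_mul_sub_inv_div {x : ℝ} (hx : 0 < x) :
    ∫ v in Ioi (0 : ℝ), (exp (-(x * v)) - (1 + v)⁻¹) / v
      = -eulerMascheroniConstant - log x := by
  obtain ⟨hi, hv⟩ := integrableOn_mul_exp_neg_mul_log hx
  have hg := integrableOn_exp_neg_mul_sub_inv_div hx
  have key : ∫ v in Ioi (0 : ℝ),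
      ((exp (-(x * v)) - (1 + v)⁻¹) / v - x * exp (-(x * v)) * log v) = 0 - 0 := by
    refine (integral_Ioi_of_hasDerivAt_of_tendsto (m := 0)
      (f := fun v : ℝ => (exp (-(x * v)) - 1) * log v + log (1 + v)) ?_ ?_ (hg.sub hi) ?_).trans
      (by simp)
    · refine ContinuousWithinAt.add ?_ ?_
      · rw [ContinuousWithinAt]
        simp only [log_zero, mul_zero]
        refine squeeze_zero_norm' (a := fun v => x * |v * log v|) ?_ ?_
        · filter_upwards [self_mem_nhdsWithin] with v (hv : 0 ≤ v)
          rw [norm_mul, abs_mul, abs_of_nonneg hv, ← mul_assoc]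
          exact mul_le_mul_of_nonneg_right (abs_exp_neg_mul_sub_one_le hx.le hv) (norm_nonneg _)
        · have : Continuous fun v : ℝ => x * |v * log v| :=
            continuous_const.mul continuous_mul_log.abs
          simpa [ContinuousWithinAt] using this.continuousWithinAt (s := Ici 0) (x := 0)
      · exact (ContinuousAt.log (by fun_prop) (by simp)).continuousWithinAt
    · intro v (hv : 0 < v)
      have h1 : HasDerivAt (fun v : ℝ => exp (-(x * v)) - 1) (exp (-(x * v)) * (-(x * 1))) v :=
        (((hasDerivAt_id v).const_mul x).neg.exp).sub_const 1
      have h2 : HasDerivAt (fun v : ℝ => log (1 + v)) (1 / (1 + v)) v :=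
        ((hasDerivAt_id v).const_add 1).log (by simp; linarith)
      refine ((h1.mul (hasDerivAt_log hv.ne')).add h2).congr_deriv ?_
      simp only [Pi.sub_apply]
      field_simp
      ring
    · have h1 : Tendsto (fun v : ℝ => exp (-(x * v)) * log v) atTop (𝓝 0) := by
        have := (tendsto_rpow_mul_exp_neg_mul_atTop_nhds_zero 1 x hx)
        refine squeeze_zero_norm' ?_ this
        filter_upwards [eventually_ge_atTop 1] with v hv
        have := log_nonneg hv
        have := log_le_self (by linarith : 0 ≤ v)
        rw [norm_of_nonneg (by positivity), rpow_one, mul_comm, neg_mul]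
        gcongr
      have h2 : Tendsto (fun v : ℝ => log (1 + v⁻¹)) atTop (𝓝 0) := by
        have : Tendsto (fun v : ℝ => 1 + v⁻¹) atTop (𝓝 (1 + 0)) :=
          tendsto_inv_atTop_zero.const_add 1
        simpa using this.log (by simp)
      have h3 := h1.add h2
      rw [add_zero] at h3
      refine h3.congr' ?_
      filter_upwards [eventually_gt_atTop 0] with v hv
      rw [show 1 + v⁻¹ = (1 + v) / v by field_simp; ring, log_div (by positivity) hv.ne']
      ring
  rw [integral_sub hg hi, hv] at key
  linarith

theorem Real.integral_inv_one_add_mul_inv_add_two :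
    IntegrableOn (fun v : ℝ => (1 + v)⁻¹ / (v + 2)) (Ioi 0) ∧
      ∫ v in Ioi (0 : ℝ), (1 + v)⁻¹ / (v + 2) = log 2 := by
  have hd : ∀ v ∈ Ici (0 : ℝ),
      HasDerivAt (fun v : ℝ => -log (1 + (1 + v)⁻¹)) ((1 + v)⁻¹ / (v + 2)) v := by
    intro v (hv : 0 ≤ v)
    have h1 : HasDerivAt (fun v : ℝ => 1 + (1 + v)⁻¹) (-1 / (1 + v) ^ 2) v :=
      (((hasDerivAt_id v).const_add 1).fun_inv (by simp; linarith)).const_add 1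
    refine (h1.log (by positivity)).neg.congr_deriv ?_
    field_simp
    ring
  have hn : ∀ v ∈ Ioi (0 : ℝ), 0 ≤ (1 + v)⁻¹ / (v + 2) := fun v (hv : 0 < v) => by positivity
  have ht : Tendsto (fun v : ℝ => -log (1 + (1 + v)⁻¹)) atTop (𝓝 0) := by
    have h1 : Tendsto (fun v : ℝ => 1 + (1 + v)⁻¹) atTop (𝓝 (1 + 0)) :=
      (tendsto_inv_atTop_zero.comp (tendsto_atTop_add_const_left _ 1 tendsto_id)).const_add 1
    simpa using (h1.log (by simp)).neg
  refine ⟨integrableOn_Ioi_deriv_of_nonneg' hd hn ht, ?_⟩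
  rw [integral_Ioi_of_hasDerivAt_of_nonneg' hd hn ht]
  norm_num

theorem Real.integral_exp_neg_mul_div_add_two {x : ℝ} (hx : 0 < x) :
    ∫ v in Ioi (0 : ℝ), exp (-(x * v)) / (v + 2)
      = ∫ u in Ioi (0 : ℝ), exp (-u) / (u + 2 * x) := by
  have h := integral_comp_mul_left_Ioi (fun u => exp (-u) / (u + 2 * x)) 0 hx
  have e : ∀ v : ℝ, exp (-(x * v)) / (x * v + 2 * x) = x⁻¹ * (exp (-(x * v)) / (v + 2)) := by
    intro v
    rw [show x * v + 2 * x = x * (v + 2) by ring, div_mul_eq_div_div_swap, div_eq_inv_mul]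
  simp_rw [e] at h
  rw [integral_const_mul, mul_zero, smul_eq_mul] at h
  exact mul_left_cancel₀ (inv_ne_zero hx.ne') h

theorem Real.integral_exp_neg_mul_sub_inv_div_mul {x : ℝ} (hx : 0 < x) :
    ∫ v in Ioi (0 : ℝ), (exp (-(x * v)) - (1 + v)⁻¹) / (v * (v + 2))
      = (-eulerMascheroniConstant - log x - (∫ u in Ioi (0 : ℝ), exp (-u) / (u + 2 * x))
          + log 2) / 2 := by
  obtain ⟨hi, hval⟩ := integral_inv_one_add_mul_inv_add_two
  have hg := integrableOn_exp_neg_mul_sub_inv_div hx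
  have he : IntegrableOn (fun v : ℝ => exp (-(x * v)) / (v + 2)) (Ioi 0) := by
    have h1 : IntegrableOn (fun v : ℝ => exp (-x * v)) (Ioi 0) :=
      integrableOn_exp_mul_Ioi (by linarith) 0
    have hm : Measurable (fun v : ℝ => exp (-(x * v)) / (v + 2)) := by fun_prop
    refine Integrable.mono' h1 hm.aestronglyMeasurable ?_
    refine (ae_restrict_iff' measurableSet_Ioi).2 (ae_of_all _ fun v (hv : 0 < v) => ?_)
    rw [norm_of_nonneg (by positivity), neg_mul]
    exact div_le_self (exp_pos _).le (by linarith)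
  have e : ∀ v ∈ Ioi (0 : ℝ), (exp (-(x * v)) - (1 + v)⁻¹) / (v * (v + 2))
      = ((exp (-(x * v)) - (1 + v)⁻¹) / v - exp (-(x * v)) / (v + 2)
          + (1 + v)⁻¹ / (v + 2)) / 2 := by
    intro v (hv : 0 < v)
    field_simp
    ring
  rw [setIntegral_congr_fun measurableSet_Ioi e, integral_div,
    integral_add (by exact hg.sub he) hi,
    integral_sub hg he, integral_exp_neg_mul_sub_inv_div hx, integral_exp_neg_mul_div_add_two hx,
    hval]

theorem Real.integral_two_mul_sq_div (u : ℝ) :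
    IntegrableOn (fun v : ℝ => 2 * u ^ 2 / ((1 + v) * ((1 + v) ^ 2 + u ^ 2))) (Ioi 0) ∧
      ∫ v in Ioi (0 : ℝ), 2 * u ^ 2 / ((1 + v) * ((1 + v) ^ 2 + u ^ 2)) = log (u ^ 2 + 1) := by
  have hd : ∀ v ∈ Ici (0 : ℝ), HasDerivAt (fun v : ℝ => -log (1 + u ^ 2 * ((1 + v) ^ 2)⁻¹))
      (2 * u ^ 2 / ((1 + v) * ((1 + v) ^ 2 + u ^ 2))) v := by
    intro v (hv : 0 ≤ v)
    have h0 : HasDerivAt (fun v : ℝ => (1 + v) ^ 2) (2 * (1 + v)) v := by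
      simpa using ((hasDerivAt_id v).const_add 1).fun_pow 2
    have h1 : HasDerivAt (fun v : ℝ => 1 + u ^ 2 * ((1 + v) ^ 2)⁻¹)
        (u ^ 2 * (-(2 * (1 + v)) / ((1 + v) ^ 2) ^ 2)) v :=
      ((h0.fun_inv (by positivity)).const_mul _).const_add 1
    refine (h1.log (by positivity)).neg.congr_deriv ?_
    field_simp
  have hn : ∀ v ∈ Ioi (0 : ℝ), 0 ≤ 2 * u ^ 2 / ((1 + v) * ((1 + v) ^ 2 + u ^ 2)) :=
    fun v (hv : 0 < v) => by positivity
  have ht : Tendsto (fun v : ℝ => -log (1 + u ^ 2 * ((1 + v) ^ 2)⁻¹)) atTop (𝓝 0) := by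
    have h0 : Tendsto (fun v : ℝ => ((1 + v) ^ 2)⁻¹) atTop (𝓝 0) :=
      tendsto_inv_atTop_zero.comp ((tendsto_pow_atTop two_ne_zero).comp
        (tendsto_atTop_add_const_left _ 1 tendsto_id))
    have h1 : Tendsto (fun v : ℝ => 1 + u ^ 2 * ((1 + v) ^ 2)⁻¹) atTop (𝓝 (1 + u ^ 2 * 0)) :=
      (h0.const_mul _).const_add 1
    simpa using (h1.log (by simp)).neg
  refine ⟨integrableOn_Ioi_deriv_of_nonneg' hd hn ht, ?_⟩
  rw [integral_Ioi_of_hasDerivAt_of_nonneg' hd hn ht]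
  simp [add_comm]

theorem Real.integrable_log_mul_rpow_neg :
    Integrable (fun u : ℝ => log (u ^ 2 + 1) * (u ^ 2 + 1) ^ (-(3 / 4) : ℝ)) := by
  have h : Integrable (fun u : ℝ => 8 * (1 + ‖u‖ ^ 2) ^ (-(5 / 4 : ℝ) / 2)) :=
    (integrable_rpow_neg_one_add_norm_sq (by norm_num)).const_mul 8
  have hm : Measurable (fun u : ℝ => log (u ^ 2 + 1) * (u ^ 2 + 1) ^ (-(3 / 4) : ℝ)) := by
    fun_prop
  refine h.mono' hm.aestronglyMeasurable (ae_of_all _ fun u => ?_)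
  have hy : 0 < u ^ 2 + 1 := by positivity
  have hl : 0 ≤ log (u ^ 2 + 1) := log_nonneg (by nlinarith [sq_nonneg u])
  have hb := log_le_rpow_div hy.le (show (0 : ℝ) < 1 / 8 by norm_num)
  rw [norm_of_nonneg (by positivity), norm_eq_abs, sq_abs, add_comm 1 (u ^ 2),
    show (-(5 / 4 : ℝ) / 2) = 1 / 8 + -(3 / 4) by norm_num, rpow_add hy, ← mul_assoc]
  gcongr
  linarith

theorem Real.integrable_log_div :
    Integrable (fun u : ℝ => log (u ^ 2 + 1) / (u ^ 2 + 1)) := by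
  have hm : Measurable (fun u : ℝ => log (u ^ 2 + 1) / (u ^ 2 + 1)) := by fun_prop
  refine integrable_log_mul_rpow_neg.mono' hm.aestronglyMeasurable (ae_of_all _ fun u => ?_)
  have hy : 1 ≤ u ^ 2 + 1 := by nlinarith [sq_nonneg u]
  have hl : 0 ≤ log (u ^ 2 + 1) := log_nonneg hy
  rw [norm_of_nonneg (by positivity), div_eq_mul_inv, ← rpow_neg_one]
  gcongr
  norm_num

theorem Real.integral_cos_mul_two_mul_sq_div {x v : ℝ} (hx : 0 < x) (hv : 0 < v) :
    ∫ u in Ioi (0 : ℝ), cos (x * u) / (u ^ 2 + 1) *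
        (2 * u ^ 2 / ((1 + v) * ((1 + v) ^ 2 + u ^ 2)))
      = π * exp (-x) * ((exp (-(x * v)) - (1 + v)⁻¹) / (v * (v + 2))) := by
  have hI : ∀ b : ℝ, 1 ≤ b → IntegrableOn (fun u : ℝ => cos (x * u) / (b ^ 2 + u ^ 2)) (Ioi 0) := by
    intro b hb
    have hm : Measurable (fun u : ℝ => cos (x * u) / (b ^ 2 + u ^ 2)) := by fun_prop
    refine (integrable_inv_one_add_sq.mono' hm.aestronglyMeasurable
      (ae_of_all _ fun u => ?_)).integrableOn
    rw [norm_div, norm_of_nonneg (show 0 ≤ b ^ 2 + u ^ 2 by positivity), div_eq_mul_inv]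
    refine (mul_le_of_le_one_left (by positivity) (abs_cos_le_one _)).trans ?_
    gcongr
    nlinarith
  have e : ∀ u : ℝ, cos (x * u) / (u ^ 2 + 1) * (2 * u ^ 2 / ((1 + v) * ((1 + v) ^ 2 + u ^ 2)))
      = 2 / ((1 + v) * (v * (v + 2))) * ((1 + v) ^ 2 * (cos (x * u) / ((1 + v) ^ 2 + u ^ 2))
          - cos (x * u) / (1 ^ 2 + u ^ 2)) := by
    intro u
    rw [one_pow, add_comm (1 : ℝ) (u ^ 2)]
    field_simp
    ring
  simp_rw [e]
  rw [integral_const_mul, integral_sub ((hI _ (by linarith)).const_mul _) (hI 1 le_rfl),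
    integral_const_mul, integral_cos_mul_div_sq_add_sq hx.le (by linarith),
    integral_cos_mul_div_sq_add_sq hx.le one_pos,
    show -(x * (1 + v)) = -x + -(x * v) by ring, exp_add, mul_one]
  field_simp

theorem Real.integral_cos_mul_log_div {x : ℝ} (hx : 0 < x) :
    ∫ u in Ioi (0 : ℝ), cos (x * u) / (u ^ 2 + 1) * log (u ^ 2 + 1)
      = π * exp (-x) * ((-eulerMascheroniConstant - log x
          - (∫ u in Ioi (0 : ℝ), exp (-u) / (u + 2 * x)) + log 2) / 2) := by
  have hm : Measurable (Function.uncurry fun u v : ℝ => cos (x * u) / (u ^ 2 + 1) *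
      (2 * u ^ 2 / ((1 + v) * ((1 + v) ^ 2 + u ^ 2)))) := by
    unfold Function.uncurry
    fun_prop
  have hK : Integrable (Function.uncurry fun u v : ℝ => cos (x * u) / (u ^ 2 + 1) *
      (2 * u ^ 2 / ((1 + v) * ((1 + v) ^ 2 + u ^ 2))))
      ((volume.restrict (Ioi 0)).prod (volume.restrict (Ioi 0))) := by
    rw [integrable_prod_iff hm.aestronglyMeasurable]
    refine ⟨ae_of_all _ fun u =>
      (integral_two_mul_sq_div u).1.const_mul (cos (x * u) / (u ^ 2 + 1)), ?_⟩
    have e : ∀ u : ℝ, ∫ v in Ioi (0 : ℝ), ‖cos (x * u) / (u ^ 2 + 1) *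
        (2 * u ^ 2 / ((1 + v) * ((1 + v) ^ 2 + u ^ 2)))‖
        = |cos (x * u)| * (log (u ^ 2 + 1) / (u ^ 2 + 1)) := by
      intro u
      have e' : ∀ v ∈ Ioi (0 : ℝ), ‖cos (x * u) / (u ^ 2 + 1) *
          (2 * u ^ 2 / ((1 + v) * ((1 + v) ^ 2 + u ^ 2)))‖ = |cos (x * u)| / (u ^ 2 + 1) *
          (2 * u ^ 2 / ((1 + v) * ((1 + v) ^ 2 + u ^ 2))) := by
        intro v (hv : 0 < v)
        rw [norm_mul, norm_div, norm_eq_abs, norm_of_nonneg (by positivity),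
          norm_of_nonneg (by positivity)]
      rw [setIntegral_congr_fun measurableSet_Ioi e', integral_const_mul,
        (integral_two_mul_sq_div u).2]
      ring
    simp only [Function.uncurry_apply_pair, e]
    have hm' : Measurable (fun u : ℝ => |cos (x * u)| * (log (u ^ 2 + 1) / (u ^ 2 + 1))) := by
      fun_prop
    refine (integrable_log_div.norm.mono' hm'.aestronglyMeasurable
      (ae_of_all _ fun u => ?_)).integrableOn
    rw [norm_mul, norm_eq_abs, abs_abs]
    exact mul_le_of_le_one_left (norm_nonneg _) (abs_cos_le_one _)
  calc ∫ u in Ioi (0 : ℝ), cos (x * u) / (u ^ 2 + 1) * log (u ^ 2 + 1)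
      = ∫ u in Ioi (0 : ℝ), ∫ v in Ioi (0 : ℝ), cos (x * u) / (u ^ 2 + 1) *
          (2 * u ^ 2 / ((1 + v) * ((1 + v) ^ 2 + u ^ 2))) := by
        simp_rw [integral_const_mul, (integral_two_mul_sq_div _).2]
    _ = ∫ v in Ioi (0 : ℝ), ∫ u in Ioi (0 : ℝ), cos (x * u) / (u ^ 2 + 1) *
          (2 * u ^ 2 / ((1 + v) * ((1 + v) ^ 2 + u ^ 2))) := integral_integral_swap hK
    _ = _ := by
        rw [setIntegral_congr_fun measurableSet_Ioi
          fun v hv => integral_cos_mul_two_mul_sq_div hx hv, integral_const_mul,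
          integral_exp_neg_mul_sub_inv_div_mul hx]

theorem Real.hasDerivAt_integral_cos_div_rpow (x : ℝ) :
    HasDerivAt (fun s : ℝ => ∫ u in Ioi (0 : ℝ), cos (x * u) / (u ^ 2 + 1) ^ (s + 1 / 2))
      (∫ u in Ioi (0 : ℝ), -(cos (x * u) / (u ^ 2 + 1) * log (u ^ 2 + 1))) (1 / 2) := by
  have hF : ∀ s : ℝ, Measurable fun u : ℝ => cos (x * u) / (u ^ 2 + 1) ^ (s + 1 / 2) :=
    fun s => by fun_prop
  have hF' : Measurable fun u : ℝ =>
      -(cos (x * u) / (u ^ 2 + 1) ^ ((1 / 2 : ℝ) + 1 / 2) * log (u ^ 2 + 1)) := by fun_prop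
  have h := (hasDerivAt_integral_of_dominated_loc_of_deriv_le (𝕜 := ℝ)
    (μ := volume.restrict (Ioi (0 : ℝ))) (x₀ := 1 / 2)
    (F := fun s u : ℝ => cos (x * u) / (u ^ 2 + 1) ^ (s + 1 / 2))
    (F' := fun s u : ℝ => -(cos (x * u) / (u ^ 2 + 1) ^ (s + 1 / 2) * log (u ^ 2 + 1)))
    (bound := fun u => log (u ^ 2 + 1) * (u ^ 2 + 1) ^ (-(3 / 4) : ℝ))
    (Ioi_mem_nhds (show (1 / 4 : ℝ) < 1 / 2 by norm_num))
    (Eventually.of_forall fun s => (hF s).aestronglyMeasurable) ?_ hF'.aestronglyMeasurable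
    ?_ integrable_log_mul_rpow_neg.integrableOn ?_).2
  · simpa only [add_halves, rpow_one] using h
  · refine (integrable_inv_one_add_sq.mono' (hF _).aestronglyMeasurable
      (ae_of_all _ fun u => ?_)).integrableOn
    rw [add_halves, rpow_one, norm_div, norm_of_nonneg (show 0 ≤ u ^ 2 + 1 by positivity),
      div_eq_mul_inv, add_comm (1 : ℝ)]
    exact mul_le_of_le_one_left (by positivity) (abs_cos_le_one _)
  · refine ae_of_all _ fun u s (hs : 1 / 4 < s) => ?_
    have hy : 1 ≤ u ^ 2 + 1 := by nlinarith [sq_nonneg u]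
    have hl : 0 ≤ log (u ^ 2 + 1) := log_nonneg hy
    rw [norm_neg, norm_mul, norm_div, norm_of_nonneg hl,
      norm_of_nonneg (by positivity : 0 ≤ (u ^ 2 + 1) ^ (s + 1 / 2)), mul_comm, div_eq_mul_inv,
      ← rpow_neg (by positivity)]
    refine mul_le_mul_of_nonneg_left ?_ hl
    refine (mul_le_of_le_one_left (by positivity) (abs_cos_le_one _)).trans ?_
    exact rpow_le_rpow_of_exponent_le hy (by linarith)
  · refine ae_of_all _ fun u s _ => ?_
    have hy : 0 < u ^ 2 + 1 := by positivity
    have h1 : HasDerivAt (fun s : ℝ => (u ^ 2 + 1) ^ (s + 1 / 2))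
        (log (u ^ 2 + 1) * 1 * (u ^ 2 + 1) ^ (s + 1 / 2)) s :=
      ((hasDerivAt_id s).add_const (1 / 2)).const_rpow hy
    have h2 : (u ^ 2 + 1) ^ (s + 1 / 2) ≠ 0 := (rpow_pos_of_pos hy _).ne'
    refine ((hasDerivAt_const s (cos (x * u))).div h1 h2).congr_deriv ?_
    field_simp
    ring

theorem stmt1 (x : ℝ) (hx : 0 < x) :
    deriv (fun s : ℝ => ∫ u in Set.Ioi (0:ℝ), Real.cos (x * u) / (u ^ 2 + 1) ^ (s + 1/2)) (1/2)
      = ((∫ u in Set.Ioi (0:ℝ), Real.exp (-u) / (u + 2 * x))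
          + Real.log x + Real.eulerMascheroniConstant - Real.log 2)
        * ((Real.pi / 2) * Real.exp (-x)) := by
  rw [(Real.hasDerivAt_integral_cos_div_rpow x).deriv, integral_neg,
    Real.integral_cos_mul_log_div hx]
  ring
end

section
/- For every real x > 0 and every natural number n, the n-th derivative with respect to s of the function s ↦ ∫₀^∞ cos(x·u)/(u² + 1)^{s + 1/2} du, evaluated at s = 1/2, equals (−1)ⁿ · ∫₀^∞ cos(x·u) · (log(u² + 1))ⁿ / (u² + 1) du. -/
open MeasureTheory Filter

/-- For `s > 0`, powers of `log (u ^ 2 + 1)` are integrable against `(u ^ 2 + 1) ^ (-(s + 1/2))`. -/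
theorem integrable_log_pow_mul_rpow_sq_add_one (n : ℕ) {s : ℝ} (hs : 0 < s) :
    Integrable (fun u : ℝ => Real.log (u ^ 2 + 1) ^ n * (u ^ 2 + 1) ^ (-(s + 1/2))) := by
  have hn : (0:ℝ) < n + 1 := by positivity
  set ε : ℝ := s / (2 * (n + 1)) with hε
  have hε0 : 0 < ε := by positivity
  have hεn : ε * n ≤ s / 2 := by
    rw [hε, div_mul_eq_mul_div, div_le_div_iff₀ (by positivity) (by norm_num)]
    nlinarith
  have hint : Integrable (fun u : ℝ => ((1 : ℝ) + ‖u‖ ^ 2) ^ (-(s + 1) / 2)) :=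
    integrable_rpow_neg_one_add_norm_sq (by simpa using hs)
  refine (hint.const_mul ((1 / ε) ^ n)).mono' (by fun_prop) (Eventually.of_forall fun u => ?_)
  have hy : (1:ℝ) ≤ u ^ 2 + 1 := by nlinarith [sq_nonneg u]
  have hy0 : (0:ℝ) < u ^ 2 + 1 := by linarith
  have hlog : 0 ≤ Real.log (u ^ 2 + 1) := Real.log_nonneg hy
  rw [Real.norm_of_nonneg (by positivity), Real.norm_eq_abs, sq_abs, add_comm (1:ℝ)]
  have hpow : Real.log (u ^ 2 + 1) ^ n ≤ (1 / ε) ^ n * (u ^ 2 + 1) ^ (s / 2) := by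
    calc Real.log (u ^ 2 + 1) ^ n ≤ ((u ^ 2 + 1) ^ ε / ε) ^ n :=
          pow_le_pow_left₀ hlog (Real.log_le_rpow_div hy0.le hε0) n
      _ = (1 / ε) ^ n * (u ^ 2 + 1) ^ (ε * n) := by
          rw [Real.rpow_mul hy0.le, Real.rpow_natCast, ← mul_pow]
          congr 1
          ring
      _ ≤ (1 / ε) ^ n * (u ^ 2 + 1) ^ (s / 2) := by gcongr
  calc Real.log (u ^ 2 + 1) ^ n * (u ^ 2 + 1) ^ (-(s + 1/2))
      ≤ (1 / ε) ^ n * (u ^ 2 + 1) ^ (s / 2) * (u ^ 2 + 1) ^ (-(s + 1/2)) := by gcongr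
    _ = (1 / ε) ^ n * (u ^ 2 + 1) ^ (-(s + 1) / 2) := by
        rw [mul_assoc, ← Real.rpow_add hy0]
        congr 2
        ring

theorem norm_cos_mul_neg_log_pow_mul_rpow_le (x u s : ℝ) (n : ℕ) :
    ‖Real.cos (x * u) * (-Real.log (u ^ 2 + 1)) ^ n * (u ^ 2 + 1) ^ (-(s + 1/2))‖
      ≤ Real.log (u ^ 2 + 1) ^ n * (u ^ 2 + 1) ^ (-(s + 1/2)) := by
  have hy : (1:ℝ) ≤ u ^ 2 + 1 := by nlinarith [sq_nonneg u]
  have hlog : 0 ≤ Real.log (u ^ 2 + 1) := Real.log_nonneg hy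
  have hrpow : 0 ≤ (u ^ 2 + 1) ^ (-(s + 1/2)) := by positivity
  rw [norm_mul, norm_mul, norm_pow, norm_neg, Real.norm_of_nonneg hlog, Real.norm_of_nonneg hrpow,
    mul_assoc]
  exact mul_le_of_le_one_left (by positivity) (Real.abs_cos_le_one _)

theorem hasDerivAt_integral_cos_mul_neg_log_pow_mul_rpow (x : ℝ) (n : ℕ) {s : ℝ} (hs : 0 < s) :
    HasDerivAt
      (fun t : ℝ => ∫ u in Set.Ioi (0:ℝ),
        Real.cos (x * u) * (-Real.log (u ^ 2 + 1)) ^ n * (u ^ 2 + 1) ^ (-(t + 1/2)))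
      (∫ u in Set.Ioi (0:ℝ),
        Real.cos (x * u) * (-Real.log (u ^ 2 + 1)) ^ (n + 1) * (u ^ 2 + 1) ^ (-(s + 1/2))) s := by
  have hmeas (m : ℕ) (t : ℝ) : AEStronglyMeasurable (fun u : ℝ =>
      Real.cos (x * u) * (-Real.log (u ^ 2 + 1)) ^ m * (u ^ 2 + 1) ^ (-(t + 1/2)))
      (volume.restrict (Set.Ioi 0)) :=
    Measurable.aestronglyMeasurable (by fun_prop)
  refine (hasDerivAt_integral_of_dominated_loc_of_deriv_le
    (F' := fun t u =>
      Real.cos (x * u) * (-Real.log (u ^ 2 + 1)) ^ (n + 1) * (u ^ 2 + 1) ^ (-(t + 1/2)))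
    (bound := fun u => Real.log (u ^ 2 + 1) ^ (n + 1) * (u ^ 2 + 1) ^ (-(s / 2 + 1/2)))
    (Ioi_mem_nhds (half_lt_self hs)) (Eventually.of_forall (hmeas n))
    ((integrable_log_pow_mul_rpow_sq_add_one n hs).integrableOn.mono' (hmeas n s)
      (Eventually.of_forall fun u => norm_cos_mul_neg_log_pow_mul_rpow_le x u s n))
    (hmeas (n + 1) s) (Eventually.of_forall fun u t ht => ?_)
    (integrable_log_pow_mul_rpow_sq_add_one (n + 1) (half_pos hs)).integrableOn
    (Eventually.of_forall fun u t _ => ?_)).2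
  · have hy : (1:ℝ) ≤ u ^ 2 + 1 := by nlinarith [sq_nonneg u]
    have hlog : 0 ≤ Real.log (u ^ 2 + 1) := Real.log_nonneg hy
    refine (norm_cos_mul_neg_log_pow_mul_rpow_le x u t (n + 1)).trans
      (mul_le_mul_of_nonneg_left (Real.rpow_le_rpow_of_exponent_le hy ?_) (by positivity))
    linarith [Set.mem_Ioi.1 ht]
  · have hy0 : (0:ℝ) < u ^ 2 + 1 := by positivity
    have hexp : HasDerivAt (fun t : ℝ => -(t + 1/2)) (-1) t :=
      ((hasDerivAt_id t).add_const (1/2 : ℝ)).neg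
    refine ((hexp.const_rpow hy0).const_mul
      (Real.cos (x * u) * (-Real.log (u ^ 2 + 1)) ^ n)).congr_deriv ?_
    ring

theorem iteratedDeriv_integral_cos_mul_rpow (x : ℝ) (n : ℕ) {s : ℝ} (hs : 0 < s) :
    iteratedDeriv n
      (fun t : ℝ => ∫ u in Set.Ioi (0:ℝ), Real.cos (x * u) / (u ^ 2 + 1) ^ (t + 1/2)) s
      = ∫ u in Set.Ioi (0:ℝ),
          Real.cos (x * u) * (-Real.log (u ^ 2 + 1)) ^ n * (u ^ 2 + 1) ^ (-(s + 1/2)) := by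
  induction n generalizing s with
  | zero =>
    rw [iteratedDeriv_zero]
    congr 1 with u
    rw [pow_zero, mul_one, Real.rpow_neg (by positivity), div_eq_mul_inv]
  | succ n ih =>
    rw [iteratedDeriv_succ,
      ← (hasDerivAt_integral_cos_mul_neg_log_pow_mul_rpow x n hs).deriv]
    apply EventuallyEq.deriv_eq
    filter_upwards [Ioi_mem_nhds hs] with t ht using ih ht

theorem stmt2 (x : ℝ) (hx : 0 < x) (n : ℕ) :
    iteratedDeriv n (fun s : ℝ => ∫ u in Set.Ioi (0:ℝ), Real.cos (x * u) / (u ^ 2 + 1) ^ (s + 1/2)) (1/2)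
      = (-1) ^ n * ∫ u in Set.Ioi (0:ℝ), Real.cos (x * u) * (Real.log (u ^ 2 + 1)) ^ n / (u ^ 2 + 1) := by
  rw [iteratedDeriv_integral_cos_mul_rpow x n (by norm_num), ← integral_const_mul]
  congr 1 with u
  rw [add_halves, Real.rpow_neg_one, neg_pow]
  ring
end

section
/- Let x > 0 be real and n ≥ 1 a natural number. Define pₙ(L) = Re( Σ_{k=0}^{n−1} (L − iπ)^{n−1−k}·(L + iπ)^{k} ) for real L, and f(n, k, y) = (iπ + log(y+1))^{n−k} − (−iπ + log(y+1))^{n−k} (a complex number, for real y > −1). Then the n-th derivative with respect to s of s ↦ ∫₀^∞ cos(x·u)/(u² + 1)^{s + 1/2} du at s = 1/2 equals (−1)ⁿ · (π/2)·e^{−x} · (A₁ + A₂ + A₃ + A₄), where A₁ = (1/(2π)) ∫_{−π}^{π} Re((log 2 + iφ)ⁿ) dφ, A₂ = − ∫₀^∞ e^{−x·u} · pₙ(log(u+2) + log u) / (u + 2) du, A₃ = x · Σ_{k=0}^{n−1} C(n,k) ∫₀^∞ e^{−x·u} · Re( f(n, k, u+1)/(2πi) ) · (log u)^{k+1}/(k+1)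 du, and A₄ = − Σ_{k=0}^{n−1} C(n,k) · (n−k) · ∫₀^∞ e^{−x·u} · Re( f(n−1, k, u+1)/(2πi) ) · (log u)^{k+1} / ((k+1)·(u+2)) du. -/
/-- The real polynomial `pₙ(L) = Re( Σ_{k=0}^{n−1} (L − iπ)^{n−1−k}·(L + iπ)^{k} )`. -/
noncomputable def besselP (n : ℕ) (L : ℝ) : ℝ :=
  (∑ k ∈ Finset.range n,
      ((L : ℂ) - Real.pi * Complex.I) ^ (n - 1 - k) * ((L : ℂ) + Real.pi * Complex.I) ^ k).re

/-- `f(n, k, y) = (iπ + log(y+1))^{n−k} − (−iπ + log(y+1))^{n−k}`. -/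
noncomputable def besselF (n k : ℕ) (y : ℝ) : ℂ :=
  (Real.pi * Complex.I + (Real.log (y + 1) : ℂ)) ^ (n - k)
    - (-(Real.pi * Complex.I) + (Real.log (y + 1) : ℂ)) ^ (n - k)

open MeasureTheory Filter Topology

/-- The polynomial `Im ((L + iπ) ^ m) / π`, the real form of `((L + iπ)ᵐ - (L - iπ)ᵐ) / (2πi)`. -/
noncomputable def imPow (m : ℕ) (L : ℝ) : ℝ :=
  (((L : ℂ) + Real.pi * Complex.I) ^ m).im / Real.pi

lemma imPow_zero (L : ℝ) : imPow 0 L = 0 := by simp [imPow]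

lemma add_pi_mul_I_pow_sub (m : ℕ) (L : ℝ) :
    ((L : ℂ) + Real.pi * Complex.I) ^ m - ((L : ℂ) - Real.pi * Complex.I) ^ m
      = 2 * Real.pi * Complex.I * (imPow m L : ℂ) := by
  have hconj : (L : ℂ) - Real.pi * Complex.I = starRingEnd ℂ (L + Real.pi * Complex.I) := by
    simp [sub_eq_add_neg]
  have hpi : (Real.pi : ℂ) ≠ 0 := by exact_mod_cast Real.pi_ne_zero
  rw [hconj, ← map_pow, Complex.sub_conj, imPow]
  push_cast
  field_simp

lemma besselP_eq_imPow (n : ℕ) (L : ℝ) : besselP n L = imPow n L := by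
  have hpi : (2 * Real.pi * Complex.I : ℂ) ≠ 0 := Complex.two_pi_I_ne_zero
  have h := geom_sum₂_mul ((L : ℂ) + Real.pi * Complex.I) ((L : ℂ) - Real.pi * Complex.I) n
  rw [add_pi_mul_I_pow_sub, show (L : ℂ) + Real.pi * Complex.I - (L - Real.pi * Complex.I)
    = 2 * Real.pi * Complex.I by ring, mul_comm] at h
  rw [besselP, Finset.sum_congr rfl fun k _ => mul_comm _ _, mul_left_cancel₀ hpi h,
    Complex.ofReal_re]

lemma re_besselF_div (n k : ℕ) (y : ℝ) :
    (besselF n k y / (2 * Real.pi * Complex.I)).re = imPow (n - k) (Real.log (y + 1)) := by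
  have h := add_pi_mul_I_pow_sub (n - k) (Real.log (y + 1))
  rw [besselF, add_comm (_ * _) (_ : ℂ), neg_add_eq_sub, h,
    mul_div_cancel_left₀ _ Complex.two_pi_I_ne_zero, Complex.ofReal_re]

lemma imPow_add (m : ℕ) (a b : ℝ) :
    imPow m (a + b) = ∑ j ∈ Finset.range (m + 1), (m.choose j : ℝ) * imPow (m - j) a * b ^ j := by
  have h : ((a + b : ℝ) : ℂ) + Real.pi * Complex.I = b + (a + Real.pi * Complex.I) := by
    push_cast
    ring
  rw [imPow, h, add_pow, Complex.im_sum, Finset.sum_div]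
  refine Finset.sum_congr rfl fun j _ => ?_
  have hj : (b : ℂ) ^ j * (a + Real.pi * Complex.I) ^ (m - j) * (m.choose j : ℂ)
      = ((m.choose j * b ^ j : ℝ) : ℂ) * (a + Real.pi * Complex.I) ^ (m - j) := by
    push_cast
    ring
  rw [hj, Complex.im_ofReal_mul, imPow]
  ring

lemma hasDerivAt_imPow (m : ℕ) (L : ℝ) :
    HasDerivAt (imPow (m + 1)) ((m + 1) * imPow m L) L := by
  have h : HasDerivAt (fun L : ℝ => ((L : ℂ) + Real.pi * Complex.I) ^ (m + 1))
      ((m + 1 : ℕ) * ((L : ℂ) + Real.pi * Complex.I) ^ m * 1) L := by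
    simpa using ((Complex.ofRealCLM.hasDerivAt (x := L)).add_const
      (Real.pi * Complex.I)).fun_pow (m + 1)
  have him := (Complex.imCLM.hasFDerivAt.comp_hasDerivAt L h).div_const Real.pi
  refine him.congr_deriv ?_
  have : ((m + 1 : ℕ) : ℂ) = ((m + 1 : ℝ) : ℂ) := by push_cast; rfl
  rw [this, mul_one, Complex.imCLM_apply, Complex.im_ofReal_mul, imPow]
  ring

lemma integral_re_add_mul_I_pow (n : ℕ) (a : ℝ) :
    1 / (2 * Real.pi) * ∫ φ in (-Real.pi)..Real.pi, (((a : ℂ) + φ * Complex.I) ^ n).re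
      = imPow (n + 1) a / (n + 1) := by
  have hderiv (φ : ℝ) : HasDerivAt
      (fun φ : ℝ => (((a : ℂ) + φ * Complex.I) ^ (n + 1)).im / (n + 1))
      ((((a : ℂ) + φ * Complex.I) ^ n).re) φ := by
    have h : HasDerivAt (fun φ : ℝ => ((a : ℂ) + φ * Complex.I) ^ (n + 1))
        ((n + 1 : ℕ) * ((a : ℂ) + φ * Complex.I) ^ n * Complex.I) φ := by
      simpa using (((Complex.ofRealCLM.hasDerivAt (x := φ)).mul_const Complex.I).const_add
        (a : ℂ)).fun_pow (n + 1)
    refine ((Complex.imCLM.hasFDerivAt.comp_hasDerivAt φ h).div_const _).congr_deriv ?_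
    have : ((n + 1 : ℕ) : ℂ) = ((n + 1 : ℝ) : ℂ) := by push_cast; rfl
    rw [this, Complex.imCLM_apply, mul_assoc, Complex.im_ofReal_mul, Complex.mul_I_im]
    field_simp
  rw [intervalIntegral.integral_eq_sub_of_hasDerivAt (fun φ _ => hderiv φ)
    (Continuous.intervalIntegrable (by fun_prop) _ _), ← sub_div, ← Complex.sub_im]
  have h := add_pi_mul_I_pow_sub (n + 1) a
  rw [Complex.ofReal_neg, neg_mul, ← sub_eq_add_neg, h]
  have him : (2 * Real.pi * Complex.I * (imPow (n + 1) a : ℂ)).im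
      = 2 * Real.pi * imPow (n + 1) a := by
    simp
  rw [him]
  field_simp

lemma iteratedDeriv_im_exp (m : ℕ) (z : ℂ) :
    iteratedDeriv m (fun t : ℝ => (Complex.exp (t * z)).im)
      = fun t : ℝ => (z ^ m * Complex.exp (t * z)).im := by
  induction m with
  | zero => simp
  | succ m ih =>
    rw [iteratedDeriv_succ, ih]
    funext t
    have h : HasDerivAt (fun t : ℝ => z ^ m * Complex.exp (t * z))
        (z ^ m * (Complex.exp (t * z) * (1 * z))) t := by
      simpa using ((((Complex.ofRealCLM.hasDerivAt (x := t)).mul_const z).cexp).const_mul (z ^ m))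
    have him := (Complex.imCLM.hasFDerivAt.comp_hasDerivAt t h).deriv
    refine him.trans ?_
    rw [Complex.imCLM_apply]
    congr 1
    ring

lemma iteratedDeriv_sin_pi_mul_div_pi (m : ℕ) :
    iteratedDeriv m (fun t : ℝ => Real.sin (Real.pi * t) / Real.pi) 0 = imPow m 0 := by
  have h : (fun t : ℝ => Real.sin (Real.pi * t) / Real.pi)
      = fun t : ℝ => Real.pi⁻¹ * (Complex.exp (t * (Real.pi * Complex.I))).im := by
    funext t
    rw [← mul_assoc, ← Complex.ofReal_mul, Complex.exp_ofReal_mul_I_im, mul_comm t]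
    ring
  rw [h, iteratedDeriv_const_mul_field, iteratedDeriv_im_exp, imPow]
  simp
  ring

/-- Laplace-type integrals with nonnegative weight are analytic at `0`, and their derivatives there
are the moments of the exponent. -/
lemma analyticAt_integral_mul_exp_mul {α : Type*} [MeasurableSpace α] {μ : Measure α}
    {g l : α → ℝ} (hg : Measurable g) (hg0 : ∀ᵐ u ∂μ, 0 ≤ g u) {δ : ℝ} (hδ : 0 < δ)
    (h : ∀ t : ℝ, |t| < δ → Integrable (fun u => g u * Real.exp (t * l u)) μ) :
    AnalyticAt ℝ (fun t : ℝ => ∫ u, g u * Real.exp (t * l u) ∂μ) 0 ∧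
      ∀ n : ℕ, Integrable (fun u => g u * l u ^ n) μ ∧
        iteratedDeriv n (fun t : ℝ => ∫ u, g u * Real.exp (t * l u) ∂μ) 0
          = ∫ u, g u * l u ^ n ∂μ := by
  set ν := μ.withDensity fun u => ENNReal.ofReal (g u) with hν
  have hm : Measurable fun u => ENNReal.ofReal (g u) := hg.ennreal_ofReal
  have hlt : ∀ᵐ u ∂μ, ENNReal.ofReal (g u) < ⊤ := ae_of_all _ fun _ => ENNReal.ofReal_lt_top
  have hcongr (F : α → ℝ) :
      (fun u => (ENNReal.ofReal (g u)).toReal • F u) =ᵐ[μ] fun u => g u * F u := by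
    filter_upwards [hg0] with u hu
    rw [ENNReal.toReal_ofReal hu, smul_eq_mul]
  have hInt (F : α → ℝ) : Integrable F ν ↔ Integrable (fun u => g u * F u) μ := by
    rw [hν, integrable_withDensity_iff_integrable_smul' hm hlt, integrable_congr (hcongr F)]
  have hval (F : α → ℝ) : ∫ u, F u ∂ν = ∫ u, g u * F u ∂μ := by
    rw [hν, integral_withDensity_eq_integral_toReal_smul hm hlt, integral_congr_ae (hcongr F)]
  have hmgf : (fun t : ℝ => ∫ u, g u * Real.exp (t * l u) ∂μ) = ProbabilityTheory.mgf l ν := by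
    funext t
    rw [ProbabilityTheory.mgf, hval]
  have hmem : (0 : ℝ) ∈ interior (ProbabilityTheory.integrableExpSet l ν) := by
    rw [mem_interior_iff_mem_nhds]
    filter_upwards [Metric.ball_mem_nhds (0 : ℝ) hδ] with t ht
    rw [ProbabilityTheory.integrableExpSet, Set.mem_ofPred_eq, hInt]
    exact h t (by simpa using ht)
  rw [hmgf]
  refine ⟨ProbabilityTheory.analyticAt_mgf hmem, fun n => ⟨?_, ?_⟩⟩
  · rw [← hInt]
    exact ProbabilityTheory.integrable_pow_of_mem_interior_integrableExpSet hmem n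
  · rw [ProbabilityTheory.iteratedDeriv_mgf_zero hmem, hval]
    rfl

open scoped FourierTransform in
lemma fourier_exp_neg_abs {b : ℝ} (hb : 0 < b) :
    𝓕 (fun v : ℝ => ((Real.exp (-(2 * Real.pi * b) * |v|) : ℝ) : ℂ))
      = fun ξ : ℝ => ((b / (Real.pi * (ξ ^ 2 + b ^ 2)) : ℝ) : ℂ) := by
  funext ξ
  have hpb : 0 < 2 * Real.pi * b := by positivity
  rw [Real.fourier_real_eq_integral_exp_smul]
  set p : ℂ := -(2 * Real.pi * b : ℝ) - (2 * Real.pi * ξ : ℝ) * Complex.I with hp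
  set q : ℂ := (2 * Real.pi * b : ℝ) - (2 * Real.pi * ξ : ℝ) * Complex.I with hq
  have hpre : p.re < 0 := by simp [hp, Real.pi_pos, hb]
  have hqre : 0 < q.re := by simp [hq, Real.pi_pos, hb]
  have hIoi : Set.EqOn (fun v : ℝ => Complex.exp ((-2 * Real.pi * v * ξ : ℝ) * Complex.I) •
      ((Real.exp (-(2 * Real.pi * b) * |v|) : ℝ) : ℂ)) (fun v : ℝ => Complex.exp (p * v))
      (Set.Ioi 0) := by
    intro v hv
    have hv : 0 < v := hv
    simp only [abs_of_pos hv, smul_eq_mul, Complex.ofReal_exp, ← Complex.exp_add, hp]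
    congr 1
    push_cast
    ring
  have hIic : Set.EqOn (fun v : ℝ => Complex.exp ((-2 * Real.pi * v * ξ : ℝ) * Complex.I) •
      ((Real.exp (-(2 * Real.pi * b) * |v|) : ℝ) : ℂ)) (fun v : ℝ => Complex.exp (q * v))
      (Set.Iic 0) := by
    intro v hv
    have hv : v ≤ 0 := hv
    simp only [abs_of_nonpos hv, smul_eq_mul, Complex.ofReal_exp, ← Complex.exp_add, hq]
    congr 1
    push_cast
    ring
  rw [← intervalIntegral.integral_Iic_add_Ioi (b := 0)
      ((integrableOn_congr_fun hIic measurableSet_Iic).2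
        (integrableOn_exp_mul_complex_Iic hqre 0))
      ((integrableOn_congr_fun hIoi measurableSet_Ioi).2
        (integrableOn_exp_mul_complex_Ioi hpre 0)),
    setIntegral_congr_fun measurableSet_Iic hIic, setIntegral_congr_fun measurableSet_Ioi hIoi,
    integral_exp_mul_complex_Iic hqre, integral_exp_mul_complex_Ioi hpre]
  have hp0 : p ≠ 0 := fun h => by simp [h] at hpre
  have hq0 : q ≠ 0 := fun h => by simp [h] at hqre
  have hpq : -(p * q) = ((4 * Real.pi ^ 2 * (ξ ^ 2 + b ^ 2) : ℝ) : ℂ) := by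
    simp only [hp, hq]
    push_cast
    linear_combination (-4 * (Real.pi : ℂ) ^ 2 * ξ ^ 2) * Complex.I_sq
  have hsum : q - p = ((4 * Real.pi * b : ℝ) : ℂ) := by
    simp only [hp, hq]
    push_cast
    ring
  calc Complex.exp (q * (0 : ℝ)) / q + -Complex.exp (p * (0 : ℝ)) / p
      = (q - p) / (-(p * q)) := by
        simp only [Complex.ofReal_zero, mul_zero, Complex.exp_zero]
        field_simp
        ring
    _ = _ := by
      rw [hpq, hsum, ← Complex.ofReal_div]
      congr 1
      have : ξ ^ 2 + b ^ 2 ≠ 0 := by positivity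
      field_simp

lemma integrable_inv_sq_add_sq {b : ℝ} (hb : 0 < b) :
    Integrable fun u : ℝ => (u ^ 2 + b ^ 2)⁻¹ := by
  have h := ((integrable_inv_one_add_sq.comp_div hb.ne').const_mul (b ^ 2)⁻¹)
  refine h.congr (ae_of_all _ fun u => ?_)
  dsimp only
  rw [← mul_inv]
  congr 1
  field_simp
  ring

open scoped FourierTransform in
lemma integral_cos_div_sq_add_sq {x b : ℝ} (hx : 0 ≤ x) (hb : 0 < b) :
    ∫ u in Set.Ioi (0:ℝ), Real.cos (x * u) / (u ^ 2 + b ^ 2)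
      = Real.pi / (2 * b) * Real.exp (-(x * b)) := by
  have hpb : 0 < 2 * Real.pi * b := by positivity
  set f : ℝ → ℂ := fun v => ((Real.exp (-(2 * Real.pi * b) * |v|) : ℝ) : ℂ) with hf
  have hcont : Continuous f := by fun_prop
  have hInt_real : Integrable fun v : ℝ => Real.exp (-(2 * Real.pi * b) * |v|) := by
    rw [← integrableOn_univ, ← Set.Iic_union_Ioi (a := (0 : ℝ)), integrableOn_union]
    constructor
    · refine (integrableOn_congr_fun (fun v hv => ?_) measurableSet_Iic).2
        (integrableOn_exp_mul_Iic hpb 0)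
      rw [abs_of_nonpos hv, neg_mul_neg]
    · refine (integrableOn_congr_fun (fun v hv => ?_) measurableSet_Ioi).2
        (integrableOn_exp_mul_Ioi (neg_lt_zero.2 hpb) 0)
      rw [abs_of_pos hv]
  have hInt : Integrable f := hInt_real.ofReal
  have hFint : Integrable (fun ξ : ℝ => ((b / (Real.pi * (ξ ^ 2 + b ^ 2)) : ℝ) : ℂ)) := by
    have h : Integrable fun ξ : ℝ => b / (Real.pi * (ξ ^ 2 + b ^ 2)) := by
      simpa only [← div_eq_mul_inv, div_div] using
        (integrable_inv_sq_add_sq hb).const_mul (b / Real.pi)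
    exact h.ofReal
  have hinv := congrFun (hcont.fourierInv_fourier_eq hInt (by
    rw [hf, fourier_exp_neg_abs hb]; exact hFint)) (x / (2 * Real.pi))
  rw [hf, fourier_exp_neg_abs hb, Real.fourierInv_eq'] at hinv
  have hre := congrArg Complex.re hinv
  have hI : Integrable fun v : ℝ => Complex.exp ((2 * Real.pi * inner ℝ v (x / (2 * Real.pi)) : ℝ)
      * Complex.I) • ((b / (Real.pi * (v ^ 2 + b ^ 2)) : ℝ) : ℂ) := by
    refine hFint.mono (by fun_prop) (ae_of_all _ fun v => ?_)
    rw [norm_smul, Complex.norm_exp_ofReal_mul_I, one_mul]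
  rw [← RCLike.re_to_complex, ← integral_re hI] at hre
  have hpt (v : ℝ) : RCLike.re (Complex.exp ((2 * Real.pi * inner ℝ v (x / (2 * Real.pi)) : ℝ)
      * Complex.I) • ((b / (Real.pi * (v ^ 2 + b ^ 2)) : ℝ) : ℂ))
      = b / Real.pi * (Real.cos (x * |v|) / (|v| ^ 2 + b ^ 2)) := by
    have h1 : 2 * Real.pi * inner ℝ v (x / (2 * Real.pi)) = x * v := by
      simp only [RCLike.inner_apply, conj_trivial]
      field_simp
    have h2 : Real.cos (x * |v|) = Real.cos (x * v) := by
      rw [← Real.cos_abs, abs_mul, abs_abs, ← abs_mul, Real.cos_abs]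
    rw [h1, h2, sq_abs, smul_eq_mul, RCLike.re_to_complex, Complex.re_mul_ofReal,
      Complex.exp_ofReal_mul_I_re]
    have : v ^ 2 + b ^ 2 ≠ 0 := by positivity
    field_simp
  simp_rw [hpt] at hre
  rw [integral_const_mul, integral_comp_abs (f := fun v => Real.cos (x * v) / (v ^ 2 + b ^ 2)),
    Complex.ofReal_re, abs_of_nonneg (by positivity)] at hre
  have he : -(2 * Real.pi * b) * (x / (2 * Real.pi)) = -(x * b) := by field_simp
  rw [he] at hre
  rw [← hre]
  field_simp

lemma integrableOn_rpow_mul_exp_neg_mul {s b : ℝ} (hs : -1 < s) (hb : 0 < b) :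
    IntegrableOn (fun u : ℝ => u ^ s * Real.exp (-(b * u))) (Set.Ioi 0) := by
  simpa only [Real.rpow_one, neg_mul] using
    integrableOn_rpow_mul_exp_neg_mul_rpow hs one_pos hb

lemma integral_rpow_div_add {ε c : ℝ} (h0 : 0 < ε) (h1 : ε < 1) (hc : 0 < c) :
    ∫ r in Set.Ioi (0:ℝ), r ^ (ε - 1) / (r + c)
      = Real.pi / Real.sin (Real.pi * ε) * c ^ (ε - 1) := by
  set F : ℝ → ℝ → ℝ := fun r t => r ^ (ε - 1) * Real.exp (-(t * r)) * Real.exp (-(t * c)) with hF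
  have hΓ (t : ℝ) (ht : 0 < t) :
      ∫ r in Set.Ioi (0:ℝ), F r t = Real.Gamma ε * (t ^ (-ε) * Real.exp (-(c * t))) := by
    simp only [hF]
    rw [integral_mul_const, Real.integral_rpow_mul_exp_neg_mul_Ioi h0 ht, one_div,
      Real.inv_rpow ht.le, ← Real.rpow_neg ht.le, mul_comm t c]
    ring
  have hInt : Integrable (Function.uncurry F)
      ((volume.restrict (Set.Ioi 0)).prod (volume.restrict (Set.Ioi 0))) := by
    rw [integrable_prod_iff' (by
      have : Measurable (Function.uncurry F) := by
        simp only [hF, Function.uncurry_def]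
        fun_prop
      exact this.aestronglyMeasurable)]
    constructor
    · filter_upwards [ae_restrict_mem measurableSet_Ioi] with t ht
      have h := (integrableOn_rpow_mul_exp_neg_mul (s := ε - 1) (by linarith)
        (Set.mem_Ioi.1 ht)).mul_const (Real.exp (-(t * c)))
      exact h
    · refine ((integrableOn_rpow_mul_exp_neg_mul (s := -ε) (by linarith) hc).const_mul
        (Real.Gamma ε)).congr ?_
      filter_upwards [ae_restrict_mem measurableSet_Ioi] with t ht
      rw [← hΓ t ht]
      refine setIntegral_congr_fun measurableSet_Ioi fun r hr => ?_
      have hr : 0 < r := hr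
      simp only [hF, Function.uncurry_apply_pair]
      rw [Real.norm_of_nonneg (by positivity)]
  have hswap := integral_integral_swap hInt
  have hleft : ∫ r in Set.Ioi (0:ℝ), ∫ t in Set.Ioi (0:ℝ), F r t
      = ∫ r in Set.Ioi (0:ℝ), r ^ (ε - 1) / (r + c) := by
    refine setIntegral_congr_fun measurableSet_Ioi fun r hr => ?_
    have hrc : 0 < r + c := add_pos hr hc
    have hpt (t : ℝ) : F r t = r ^ (ε - 1) * Real.exp (-(r + c) * t) := by
      simp only [hF]
      rw [mul_assoc, ← Real.exp_add]
      congr 2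
      ring
    simp_rw [hpt]
    rw [integral_const_mul, integral_exp_mul_Ioi (neg_lt_zero.2 hrc)]
    rw [mul_zero, Real.exp_zero, neg_div_neg_eq, mul_one_div]
  rw [← hleft, hswap, setIntegral_congr_fun measurableSet_Ioi fun t ht => hΓ t ht,
    integral_const_mul]
  have h := Real.integral_rpow_mul_exp_neg_mul_Ioi (a := 1 - ε) (by linarith) hc
  rw [show 1 - ε - 1 = -ε by ring] at h
  rw [h, ← Real.Gamma_mul_Gamma_one_sub, one_div, Real.inv_rpow hc.le, ← Real.rpow_neg hc.le,
    neg_sub]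
  ring

lemma sin_pi_mul_pos {ε : ℝ} (h0 : 0 < ε) (h1 : ε < 1) : 0 < Real.sin (Real.pi * ε) :=
  Real.sin_pos_of_pos_of_lt_pi (by positivity) (by nlinarith [Real.pi_pos])

lemma integrableOn_rpow_div_add {ε c : ℝ} (h0 : 0 < ε) (h1 : ε < 1) (hc : 0 < c) :
    IntegrableOn (fun r : ℝ => r ^ (ε - 1) / (r + c)) (Set.Ioi 0) := by
  by_contra h
  have hzero := integral_undef h
  rw [integral_rpow_div_add h0 h1 hc] at hzero
  have := sin_pi_mul_pos h0 h1
  exact absurd hzero (by positivity)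

lemma integrable_sq_add_one_rpow {ε : ℝ} (h : ε < 1 / 2) :
    Integrable fun u : ℝ => (u ^ 2 + 1) ^ (ε - 1) := by
  have := integrable_rpow_neg_one_add_norm_sq (E := ℝ) (μ := volume) (r := 2 * (1 - ε))
    (by simp; linarith)
  refine this.congr (ae_of_all _ fun u => ?_)
  simp only [Real.norm_eq_abs, sq_abs]
  congr 1 <;> ring

lemma integral_cos_mul_sq_add_one_rpow_eq_sqrt {x ε : ℝ} (hx : 0 ≤ x) (h0 : 0 < ε)
    (h1 : ε < 1 / 2) :
    ∫ u in Set.Ioi (0:ℝ), Real.cos (x * u) * (u ^ 2 + 1) ^ (ε - 1)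
      = Real.sin (Real.pi * ε) / 2 * ∫ r in Set.Ioi (0:ℝ),
          r ^ (ε - 1) * (Real.exp (-(x * √(r + 1))) / √(r + 1)) := by
  have hsin := sin_pi_mul_pos h0 (h1.trans (by norm_num))
  set F : ℝ → ℝ → ℝ := fun u r => Real.cos (x * u) * (r ^ (ε - 1) / (r + (u ^ 2 + 1))) with hF
  have hInt : Integrable (Function.uncurry F)
      ((volume.restrict (Set.Ioi 0)).prod (volume.restrict (Set.Ioi 0))) := by
    rw [integrable_prod_iff (by
      have : Measurable (Function.uncurry F) := by
        simp only [hF, Function.uncurry_def]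
        fun_prop
      exact this.aestronglyMeasurable)]
    constructor
    · exact ae_of_all _ fun u => (integrableOn_rpow_div_add h0 (by linarith)
        (by positivity : 0 < u ^ 2 + 1)).const_mul (Real.cos (x * u))
    · have hcos : Integrable fun u : ℝ => |Real.cos (x * u)| *
          (Real.pi / Real.sin (Real.pi * ε) * (u ^ 2 + 1) ^ (ε - 1)) := by
        refine ((integrable_sq_add_one_rpow h1).const_mul _).bdd_mul (c := 1) (by fun_prop)
          (ae_of_all _ fun u => ?_)
        rw [Real.norm_eq_abs, abs_abs]
        exact Real.abs_cos_le_one _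
      refine hcos.integrableOn.congr (ae_of_all _ fun u => ?_)
      dsimp only
      rw [← integral_rpow_div_add h0 (by linarith) (by positivity : 0 < u ^ 2 + 1),
        ← integral_const_mul]
      refine setIntegral_congr_fun measurableSet_Ioi fun r hr => ?_
      have hr : 0 < r := hr
      simp only [hF, Function.uncurry_apply_pair]
      rw [norm_mul, Real.norm_eq_abs, Real.norm_of_nonneg (by positivity)]
  have hswap := integral_integral_swap hInt
  have hleft : ∫ u in Set.Ioi (0:ℝ), ∫ r in Set.Ioi (0:ℝ), F u r
      = Real.pi / Real.sin (Real.pi * ε) *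
        ∫ u in Set.Ioi (0:ℝ), Real.cos (x * u) * (u ^ 2 + 1) ^ (ε - 1) := by
    rw [← integral_const_mul]
    refine setIntegral_congr_fun measurableSet_Ioi fun u _ => ?_
    simp only [hF]
    rw [integral_const_mul, integral_rpow_div_add h0 (by linarith) (by positivity)]
    ring
  have hright : ∫ r in Set.Ioi (0:ℝ), ∫ u in Set.Ioi (0:ℝ), F u r
      = Real.pi / 2 * ∫ r in Set.Ioi (0:ℝ),
          r ^ (ε - 1) * (Real.exp (-(x * √(r + 1))) / √(r + 1)) := by
    rw [← integral_const_mul]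
    refine setIntegral_congr_fun measurableSet_Ioi fun r hr => ?_
    have hr1 : 0 < r + 1 := add_pos hr one_pos
    have hpt (u : ℝ) : F u r = r ^ (ε - 1) * (Real.cos (x * u) / (u ^ 2 + √(r + 1) ^ 2)) := by
      simp only [hF]
      rw [Real.sq_sqrt hr1.le, show u ^ 2 + (r + 1) = r + (u ^ 2 + 1) by ring]
      ring
    simp_rw [hpt]
    rw [integral_const_mul, integral_cos_div_sq_add_sq hx (Real.sqrt_pos.2 hr1)]
    ring
  rw [hleft, hright] at hswap
  have := Real.pi_pos
  field_simp at hswap ⊢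
  linarith

/-- Rotation of the contour onto the cut of `(u ^ 2 + 1) ^ (ε - 1)`, in real form. -/
lemma integral_cos_mul_sq_add_one_rpow {x ε : ℝ} (hx : 0 ≤ x) (h0 : 0 < ε) (h1 : ε < 1 / 2) :
    ∫ u in Set.Ioi (0:ℝ), Real.cos (x * u) * (u ^ 2 + 1) ^ (ε - 1)
      = Real.exp (-x) * Real.sin (Real.pi * ε) * ∫ u in Set.Ioi (0:ℝ),
          Real.exp (-(x * u)) * (u * (u + 2)) ^ (ε - 1) := by
  have himage : (fun u : ℝ => u * (u + 2)) '' Set.Ioi 0 = Set.Ioi 0 := by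
    ext r
    simp only [Set.mem_image, Set.mem_Ioi]
    constructor
    · rintro ⟨u, hu, rfl⟩
      positivity
    · intro hr
      refine ⟨√(r + 1) - 1, ?_, ?_⟩
      · rw [sub_pos, Real.lt_sqrt one_pos.le]
        linarith
      · linear_combination Real.sq_sqrt (by linarith : 0 ≤ r + 1)
  have hinj : Set.InjOn (fun u : ℝ => u * (u + 2)) (Set.Ioi 0) := by
    intro u hu v hv huv
    have hu : 0 < u := hu
    have hv : 0 < v := hv
    have h : (u - v) * (u + v + 2) = 0 := by linear_combination huv
    rcases mul_eq_zero.1 h with h | h <;> linarith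
  have hderiv : ∀ u ∈ Set.Ioi (0:ℝ),
      HasDerivWithinAt (fun u : ℝ => u * (u + 2)) (2 * (u + 1)) (Set.Ioi 0) u := by
    intro u _
    convert! ((hasDerivAt_id u).mul ((hasDerivAt_id u).add_const 2)).hasDerivWithinAt using 1
    simp
    ring
  rw [integral_cos_mul_sq_add_one_rpow_eq_sqrt hx h0 h1]
  conv_lhs => rw [← himage]
  rw [integral_image_eq_integral_abs_deriv_smul measurableSet_Ioi hderiv hinj, ← integral_const_mul,
    ← integral_const_mul]
  refine setIntegral_congr_fun measurableSet_Ioi fun u hu => ?_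
  have hu : 0 < u := hu
  have hsqrt : √(u * (u + 2) + 1) = u + 1 := by
    rw [show u * (u + 2) + 1 = (u + 1) ^ 2 by ring, Real.sqrt_sq (by linarith)]
  rw [hsqrt, abs_of_pos (by linarith), smul_eq_mul,
    show -(x * (u + 1)) = -x + -(x * u) by ring, Real.exp_add]
  field_simp

lemma integrableOn_exp_neg_mul_of_bound {x t C : ℝ} (hx : 0 < x) (ht : -1 < t) {h : ℝ → ℝ}
    (hm : Measurable h) (hb : ∀ u : ℝ, 0 < u → |h u| ≤ C * (u ^ t * (u + 2))) :
    IntegrableOn (fun u : ℝ => Real.exp (-(x * u)) * h u) (Set.Ioi 0) := by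
  have hdom := (((integrableOn_rpow_mul_exp_neg_mul (s := t + 1) (by linarith) hx).add
    ((integrableOn_rpow_mul_exp_neg_mul ht hx).const_mul 2)).const_mul C)
  refine Integrable.mono' hdom (by fun_prop) ?_
  filter_upwards [ae_restrict_mem measurableSet_Ioi] with u hu
  have hu : 0 < u := hu
  rw [norm_mul, Real.norm_of_nonneg (Real.exp_nonneg _), Real.norm_eq_abs]
  refine (mul_le_mul_of_nonneg_left (hb u hu) (Real.exp_nonneg _)).trans (le_of_eq ?_)
  simp only [Pi.add_apply]
  rw [Real.rpow_add_one hu.ne']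
  ring

lemma integrableOn_div_add_two {f : ℝ → ℝ} (hf : IntegrableOn f (Set.Ioi 0)) :
    IntegrableOn (fun u => f u / (u + 2)) (Set.Ioi 0) := by
  simp only [div_eq_mul_inv]
  refine hf.mul_bdd (c := 1) (by fun_prop) ?_
  filter_upwards [ae_restrict_mem measurableSet_Ioi] with u hu
  have hu : 0 < u := hu
  rw [Real.norm_of_nonneg (by positivity)]
  exact inv_le_one_of_one_le₀ (by linarith)

lemma log_add_two_pow_le (m : ℕ) {u : ℝ} (hu : 0 < u) :
    Real.log (u + 2) ^ m ≤ m.factorial * (u + 2) := by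
  have h := Real.pow_div_factorial_le_exp (Real.log (u + 2)) (Real.log_nonneg (by linarith)) m
  rw [Real.exp_log (by linarith), div_le_iff₀ (by positivity)] at h
  linarith

lemma integrableOn_exp_neg_mul_log_pow_mul_log_pow {x : ℝ} (hx : 0 < x) (m k : ℕ) :
    IntegrableOn (fun u : ℝ => Real.exp (-(x * u)) * Real.log (u + 2) ^ m * Real.log u ^ k)
      (Set.Ioi 0) := by
  refine ((analyticAt_integral_mul_exp_mul (μ := volume.restrict (Set.Ioi (0:ℝ)))
    (g := fun u => Real.exp (-(x * u)) * Real.log (u + 2) ^ m) (l := Real.log) (by fun_prop) ?_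
    one_pos fun t ht => ?_).2 k).1
  · filter_upwards [ae_restrict_mem measurableSet_Ioi] with u hu
    have hu : 0 < u := hu
    have := Real.log_nonneg (by linarith : 1 ≤ u + 2)
    positivity
  · simp only [mul_assoc]
    refine integrableOn_exp_neg_mul_of_bound (t := t) (C := m.factorial) hx (abs_lt.1 ht).1
      (by fun_prop) fun u hu => ?_
    have := Real.log_nonneg (by linarith : 1 ≤ u + 2)
    rw [abs_of_nonneg (by positivity), mul_comm t, ← Real.rpow_def_of_pos hu]
    nlinarith [mul_le_mul_of_nonneg_right (log_add_two_pow_le m hu) (Real.rpow_nonneg hu.le t)]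

lemma integrableOn_exp_neg_mul_imPow_mul_log_pow {x : ℝ} (hx : 0 < x) (m k : ℕ) :
    IntegrableOn (fun u : ℝ =>
      Real.exp (-(x * u)) * imPow m (Real.log (u + 2)) * Real.log u ^ k) (Set.Ioi 0) := by
  have h : (fun u : ℝ => Real.exp (-(x * u)) * imPow m (Real.log (u + 2)) * Real.log u ^ k)
      = fun u : ℝ => ∑ j ∈ Finset.range (m + 1), (m.choose j : ℝ) * imPow (m - j) 0 *
        (Real.exp (-(x * u)) * Real.log (u + 2) ^ j * Real.log u ^ k) := by
    funext u
    rw [← zero_add (Real.log (u + 2)), imPow_add, Finset.mul_sum, Finset.sum_mul]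
    refine Finset.sum_congr rfl fun j _ => ?_
    rw [zero_add]
    ring
  rw [h]
  exact integrable_finsetSum _ fun j _ =>
    (integrableOn_exp_neg_mul_log_pow_mul_log_pow hx j k).const_mul _

lemma integrableOn_exp_neg_mul_exp_log {x t : ℝ} (hx : 0 < x) (h0 : -1 < t) (h1 : t ≤ 1) :
    IntegrableOn (fun u : ℝ =>
      Real.exp (-(x * u)) * Real.exp (t * (Real.log (u + 2) + Real.log u))) (Set.Ioi 0) := by
  refine integrableOn_exp_neg_mul_of_bound (t := t) (C := 1) hx h0 (by fun_prop) fun u hu => ?_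
  have hlog := Real.log_nonneg (by linarith : 1 ≤ u + 2)
  rw [Real.abs_exp, mul_add, Real.exp_add, mul_comm t (Real.log u), ← Real.rpow_def_of_pos hu,
    one_mul, mul_comm]
  refine mul_le_mul_of_nonneg_left ?_ (Real.rpow_nonneg hu.le _)
  calc Real.exp (t * Real.log (u + 2)) ≤ Real.exp (Real.log (u + 2)) :=
        Real.exp_le_exp.2 (mul_le_of_le_one_left hlog h1)
    _ = u + 2 := Real.exp_log (by linarith)

lemma exp_mul_log_add_two_add_log {t u : ℝ} (hu : 0 < u) :
    Real.exp (t * (Real.log (u + 2) + Real.log u)) = (u * (u + 2)) ^ t := by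
  rw [add_comm, ← Real.log_mul hu.ne' (by linarith), Real.rpow_def_of_pos (by positivity), mul_comm]

lemma integral_exp_neg_mul_rpow_by_parts {x ε : ℝ} (hx : 0 < x) (h0 : 0 < ε) (h1 : ε ≤ 1) :
    2 * ε * ∫ u in Set.Ioi (0:ℝ), Real.exp (-(x * u)) * (u * (u + 2)) ^ (ε - 1)
      = x * (∫ u in Set.Ioi (0:ℝ), Real.exp (-(x * u)) * (u * (u + 2)) ^ ε)
        - 2 * ε * ∫ u in Set.Ioi (0:ℝ), Real.exp (-(x * u)) * (u * (u + 2)) ^ ε / (u + 2) := by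
  have hInt {t : ℝ} (ht0 : -1 < t) (ht1 : t ≤ 1) :
      IntegrableOn (fun u : ℝ => Real.exp (-(x * u)) * (u * (u + 2)) ^ t) (Set.Ioi 0) :=
    (integrableOn_congr_fun (fun u hu => by rw [exp_mul_log_add_two_add_log hu])
      measurableSet_Ioi).1 (integrableOn_exp_neg_mul_exp_log hx ht0 ht1)
  have hI := hInt (by linarith) h1
  have hI1 := hInt (t := ε - 1) (by linarith) (by linarith)
  have hI2 := integrableOn_div_add_two hI
  have hderiv : ∀ u ∈ Set.Ioi (0:ℝ), HasDerivAt
      (fun u : ℝ => Real.exp (-(x * u)) * (u * (u + 2)) ^ ε)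
      (2 * ε * (Real.exp (-(x * u)) * (u * (u + 2)) ^ (ε - 1))
        - x * (Real.exp (-(x * u)) * (u * (u + 2)) ^ ε)
        + 2 * ε * (Real.exp (-(x * u)) * (u * (u + 2)) ^ ε / (u + 2))) u := by
    intro u hu
    have hu : 0 < u := hu
    have hw : 0 < u * (u + 2) := by positivity
    have hexp : HasDerivAt (fun u : ℝ => Real.exp (-(x * u))) (Real.exp (-(x * u)) * -(x * 1)) u :=
      ((hasDerivAt_id u).const_mul x).neg.exp
    have hmul : HasDerivAt (fun u : ℝ => u * (u + 2)) (1 * (u + 2) + u * 1) u :=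
      (hasDerivAt_id u).mul ((hasDerivAt_id u).add_const 2)
    refine (hexp.mul (hmul.rpow_const (p := ε) (Or.inl hw.ne'))).congr_deriv ?_
    rw [show (u * (u + 2)) ^ ε = (u * (u + 2)) ^ (ε - 1) * (u * (u + 2)) by
      rw [← Real.rpow_add_one hw.ne', sub_add_cancel]]
    field_simp
    ring
  have hsub : IntegrableOn (fun u : ℝ => 2 * ε * (Real.exp (-(x * u)) * (u * (u + 2)) ^ (ε - 1))
      - x * (Real.exp (-(x * u)) * (u * (u + 2)) ^ ε)) (Set.Ioi 0) :=
    (hI1.const_mul (2 * ε)).sub (hI.const_mul x)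
  have hI' := hsub.add (hI2.const_mul (2 * ε))
  have hcont : ContinuousWithinAt (fun u : ℝ => Real.exp (-(x * u)) * (u * (u + 2)) ^ ε)
      (Set.Ici 0) 0 := by
    refine ContinuousAt.continuousWithinAt (ContinuousAt.mul (by fun_prop) ?_)
    exact ContinuousAt.rpow_const (by fun_prop) (Or.inr h0.le)
  have hftc := integral_Ioi_of_hasDerivAt_of_tendsto hcont hderiv hI'
    (tendsto_zero_of_hasDerivAt_of_integrableOn_Ioi hderiv hI' hI)
  rw [integral_add hsub (hI2.const_mul (2 * ε)),
    integral_sub (hI1.const_mul (2 * ε)) (hI.const_mul x)] at hftc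
  simp only [integral_const_mul, zero_mul, Real.zero_rpow h0.ne', mul_zero, sub_zero] at hftc
  linarith

/-- Integration by parts for `u ↦ exp (-(x * u)) * imPow (n + 1) (log (u + 2))` on `(0, ∞)`. -/
lemma imPow_log_two_eq {x : ℝ} (hx : 0 < x) (n : ℕ) :
    imPow (n + 1) (Real.log 2)
      = x * (∫ u in Set.Ioi (0:ℝ), Real.exp (-(x * u)) * imPow (n + 1) (Real.log (u + 2)))
        - (n + 1) * ∫ u in Set.Ioi (0:ℝ),
            Real.exp (-(x * u)) * imPow n (Real.log (u + 2)) / (u + 2) := by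
  have hI (m : ℕ) : IntegrableOn (fun u : ℝ => Real.exp (-(x * u)) * imPow m (Real.log (u + 2)))
      (Set.Ioi 0) := by
    simpa using integrableOn_exp_neg_mul_imPow_mul_log_pow hx m 0
  have hderiv : ∀ u ∈ Set.Ici (0:ℝ), HasDerivAt
      (fun u : ℝ => Real.exp (-(x * u)) * imPow (n + 1) (Real.log (u + 2)))
      ((n + 1) * (Real.exp (-(x * u)) * imPow n (Real.log (u + 2)) / (u + 2))
        - x * (Real.exp (-(x * u)) * imPow (n + 1) (Real.log (u + 2)))) u := by
    intro u hu
    have hu : 0 < u + 2 := by linarith [Set.mem_Ici.1 hu]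
    have hexp : HasDerivAt (fun u : ℝ => Real.exp (-(x * u))) (Real.exp (-(x * u)) * -(x * 1)) u :=
      ((hasDerivAt_id u).const_mul x).neg.exp
    have hlog : HasDerivAt (fun u : ℝ => Real.log (u + 2)) (1 / (u + 2)) u :=
      ((hasDerivAt_id u).add_const 2).log hu.ne'
    refine (hexp.mul ((hasDerivAt_imPow n _).comp u hlog)).congr_deriv ?_
    field_simp
    simp
    ring
  have hI2 := (integrableOn_div_add_two (hI n)).const_mul (n + 1 : ℝ)
  have hI1 := (hI (n + 1)).const_mul x
  have hI' := hI2.sub hI1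
  have hftc := integral_Ioi_of_hasDerivAt_of_tendsto' hderiv hI'
    (tendsto_zero_of_hasDerivAt_of_integrableOn_Ioi
      (fun u hu => hderiv u (Set.Ioi_subset_Ici_self hu)) hI' (hI (n + 1)))
  rw [integral_sub hI2 hI1] at hftc
  simp only [integral_const_mul, mul_zero, neg_zero, Real.exp_zero, one_mul, zero_add] at hftc
  linarith

lemma iteratedDeriv_succ_id_mul {f : ℝ → ℝ} (hf : AnalyticAt ℝ f 0) (n : ℕ) :
    iteratedDeriv (n + 1) (fun t => t * f t) 0 = (n + 1) * iteratedDeriv n f 0 := by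
  rw [iteratedDeriv_fun_mul (by fun_prop) hf.contDiffAt, Finset.sum_eq_single 1]
  · simp [iteratedDeriv_fun_id_zero]
  · intro j _ hj
    simp [iteratedDeriv_fun_id_zero, hj]
  · simp

lemma analyticAt_sin_pi_mul_div_pi :
    AnalyticAt ℝ (fun t : ℝ => Real.sin (Real.pi * t) / Real.pi) 0 := by
  fun_prop

lemma iteratedDeriv_sin_mul_integral {α : Type*} [MeasurableSpace α] {μ : Measure α}
    {g l : α → ℝ} (hg : Measurable g) (hg0 : ∀ᵐ u ∂μ, 0 ≤ g u) {δ : ℝ} (hδ : 0 < δ)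
    (h : ∀ t : ℝ, |t| < δ → Integrable (fun u => g u * Real.exp (t * l u)) μ) (m : ℕ) :
    iteratedDeriv m (fun t : ℝ => Real.sin (Real.pi * t) / Real.pi *
        ∫ u, g u * Real.exp (t * l u) ∂μ) 0
      = ∫ u, g u * imPow m (l u) ∂μ := by
  obtain ⟨han, hmom⟩ := analyticAt_integral_mul_exp_mul hg hg0 hδ h
  have hexp : (fun u => g u * imPow m (l u)) = fun u => ∑ j ∈ Finset.range (m + 1),
      (m.choose j : ℝ) * imPow (m - j) 0 * (g u * l u ^ j) := by
    funext u
    rw [← zero_add (l u), imPow_add, Finset.mul_sum]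
    refine Finset.sum_congr rfl fun j _ => ?_
    rw [zero_add]
    ring
  rw [hexp, integral_finsetSum _ fun j _ => (hmom j).1.const_mul _]
  simp only [mul_comm (Real.sin _ / _)]
  rw [iteratedDeriv_fun_mul han.contDiffAt analyticAt_sin_pi_mul_div_pi.contDiffAt]
  refine Finset.sum_congr rfl fun j _ => ?_
  rw [iteratedDeriv_sin_pi_mul_div_pi, (hmom j).2, integral_const_mul]
  ring

lemma analyticAt_integral_cos_mul_sq_add_one_rpow (x : ℝ) :
    AnalyticAt ℝ (fun ε : ℝ => ∫ u in Set.Ioi (0:ℝ), Real.cos (x * u) * (u ^ 2 + 1) ^ (ε - 1))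
      0 := by
  have hpow (ε u : ℝ) : (u ^ 2 + 1 : ℝ) ^ (ε - 1)
      = (u ^ 2 + 1)⁻¹ * Real.exp (ε * Real.log (u ^ 2 + 1)) := by
    have hu : 0 < u ^ 2 + 1 := by positivity
    rw [Real.rpow_sub hu, Real.rpow_one, Real.rpow_def_of_pos hu, mul_comm ε]
    ring
  have hInt {ε : ℝ} (h : |ε| < 1 / 2) : IntegrableOn (fun u : ℝ =>
      (u ^ 2 + 1)⁻¹ * Real.exp (ε * Real.log (u ^ 2 + 1))) (Set.Ioi 0) := by
    simp only [← hpow]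
    exact (integrable_sq_add_one_rpow (abs_lt.1 h).2).integrableOn
  have hintc {ε : ℝ} (h : |ε| < 1 / 2) : IntegrableOn (fun u : ℝ =>
      (1 + Real.cos (x * u)) * (u ^ 2 + 1)⁻¹ * Real.exp (ε * Real.log (u ^ 2 + 1)))
        (Set.Ioi 0) := by
    simp only [mul_assoc]
    refine (hInt h).bdd_mul (c := 2) (by fun_prop) (ae_of_all _ fun u => ?_)
    rw [Real.norm_eq_abs, abs_le]
    constructor <;> linarith [Real.cos_le_one (x * u), Real.neg_one_le_cos (x * u)]
  have h1 := (analyticAt_integral_mul_exp_mul (μ := volume.restrict (Set.Ioi (0:ℝ)))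
    (g := fun u => (1 + Real.cos (x * u)) * (u ^ 2 + 1)⁻¹) (l := fun u => Real.log (u ^ 2 + 1))
    (by fun_prop) (ae_of_all _ fun u => mul_nonneg (by linarith [Real.neg_one_le_cos (x * u)])
      (by positivity)) one_half_pos fun t ht => hintc ht).1
  have h2 := (analyticAt_integral_mul_exp_mul (μ := volume.restrict (Set.Ioi (0:ℝ)))
    (g := fun u => (u ^ 2 + 1)⁻¹) (l := fun u => Real.log (u ^ 2 + 1))
    (by fun_prop) (ae_of_all _ fun u => by positivity) one_half_pos fun t ht => hInt ht).1
  refine (h1.sub h2).congr ?_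
  filter_upwards [Metric.ball_mem_nhds (0 : ℝ) one_half_pos] with ε hε
  have hε : |ε| < 1 / 2 := by simpa using hε
  simp only [Pi.sub_apply]
  rw [← integral_sub (hintc hε) (hInt hε)]
  congr 1
  funext u
  rw [hpow]
  ring

/-- The derivatives at `0` of the cosine integral, as integrals against `exp (-(x * u))`. -/
lemma iteratedDeriv_integral_cos {x : ℝ} (hx : 0 < x) (n : ℕ) :
    (n + 1) * iteratedDeriv n (fun ε : ℝ => ∫ u in Set.Ioi (0:ℝ),
        Real.cos (x * u) * (u ^ 2 + 1) ^ (ε - 1)) 0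
      = Real.pi / 2 * Real.exp (-x) *
        (x * (∫ u in Set.Ioi (0:ℝ),
            Real.exp (-(x * u)) * imPow (n + 1) (Real.log (u + 2) + Real.log u))
          - 2 * ((n + 1) * ∫ u in Set.Ioi (0:ℝ),
            Real.exp (-(x * u)) / (u + 2) * imPow n (Real.log (u + 2) + Real.log u))) := by
  set S : ℝ → ℝ := fun ε => Real.sin (Real.pi * ε) / Real.pi
  set J : ℝ → ℝ := fun ε => ∫ u in Set.Ioi (0:ℝ),
    Real.exp (-(x * u)) * Real.exp (ε * (Real.log (u + 2) + Real.log u)) with hJ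
  set K : ℝ → ℝ := fun ε => ∫ u in Set.Ioi (0:ℝ),
    Real.exp (-(x * u)) / (u + 2) * Real.exp (ε * (Real.log (u + 2) + Real.log u)) with hK
  set F : ℝ → ℝ := fun ε => ∫ u in Set.Ioi (0:ℝ), Real.cos (x * u) * (u ^ 2 + 1) ^ (ε - 1) with hF
  have hJint (t : ℝ) (ht : |t| < 1) : IntegrableOn (fun u : ℝ =>
      Real.exp (-(x * u)) * Real.exp (t * (Real.log (u + 2) + Real.log u))) (Set.Ioi 0) :=
    integrableOn_exp_neg_mul_exp_log hx (abs_lt.1 ht).1 (abs_lt.1 ht).2.le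
  have hKint (t : ℝ) (ht : |t| < 1) : IntegrableOn (fun u : ℝ =>
      Real.exp (-(x * u)) / (u + 2) * Real.exp (t * (Real.log (u + 2) + Real.log u)))
        (Set.Ioi 0) := by
    simp only [div_mul_eq_mul_div]
    exact integrableOn_div_add_two (hJint t ht)
  have hKpos : ∀ᵐ u ∂volume.restrict (Set.Ioi (0:ℝ)), 0 ≤ Real.exp (-(x * u)) / (u + 2) := by
    filter_upwards [ae_restrict_mem measurableSet_Ioi] with u hu
    have hu : 0 < u := hu
    positivity
  have hJan : AnalyticAt ℝ J 0 := (analyticAt_integral_mul_exp_mul (by fun_prop)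
    (ae_of_all _ fun u => Real.exp_nonneg _) one_pos hJint).1
  have hKan : AnalyticAt ℝ K 0 :=
    (analyticAt_integral_mul_exp_mul (by fun_prop) hKpos one_pos hKint).1
  have hFan : AnalyticAt ℝ F 0 := analyticAt_integral_cos_mul_sq_add_one_rpow x
  have hSan : AnalyticAt ℝ S 0 := analyticAt_sin_pi_mul_div_pi
  have hSJ := hSan.fun_mul hJan
  have hSK := hSan.fun_mul hKan
  have hid : AnalyticAt ℝ (fun ε : ℝ => ε) 0 := analyticAt_id
  have hidSK := hid.fun_mul hSK
  have heq : (fun ε => ε * F ε) =ᶠ[𝓝 0] fun ε =>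
      Real.pi / 2 * Real.exp (-x) * (x * (S ε * J ε) - 2 * (ε * (S ε * K ε))) := by
    refine ((hid.fun_mul hFan).frequently_eq_iff_eventually_eq (analyticAt_const.fun_mul
      ((analyticAt_const.fun_mul hSJ).fun_sub (analyticAt_const.fun_mul hidSK)))).1 ?_
    have hev : ∀ᶠ ε : ℝ in 𝓝[>] 0, ε * F ε
        = Real.pi / 2 * Real.exp (-x) * (x * (S ε * J ε) - 2 * (ε * (S ε * K ε))) := by
      filter_upwards [Ioo_mem_nhdsGT (one_half_pos (α := ℝ))] with ε ⟨h0, h1⟩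
      have hJ' : J ε = ∫ u in Set.Ioi (0:ℝ), Real.exp (-(x * u)) * (u * (u + 2)) ^ ε :=
        setIntegral_congr_fun measurableSet_Ioi fun u hu => by
          simp only [exp_mul_log_add_two_add_log hu]
      have hK' : K ε = ∫ u in Set.Ioi (0:ℝ), Real.exp (-(x * u)) * (u * (u + 2)) ^ ε / (u + 2) :=
        setIntegral_congr_fun measurableSet_Ioi fun u hu => by
          simp only [exp_mul_log_add_two_add_log hu, div_mul_eq_mul_div]
      have hparts := integral_exp_neg_mul_rpow_by_parts hx h0 (by linarith)
      rw [← hJ', ← hK'] at hparts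
      have hS : Real.sin (Real.pi * ε) = Real.pi * S ε :=
        (mul_div_cancel₀ _ Real.pi_ne_zero).symm
      simp only [hF, integral_cos_mul_sq_add_one_rpow hx.le h0 h1, hS]
      linear_combination Real.exp (-x) * Real.pi * S ε / 2 * hparts
    exact hev.frequently.filter_mono (nhdsWithin_mono _ fun _ h => ne_of_gt h)
  have hD := heq.iteratedDeriv_eq (n + 1)
  rw [iteratedDeriv_succ_id_mul hFan, iteratedDeriv_const_mul_field,
    iteratedDeriv_fun_sub (analyticAt_const.fun_mul hSJ).contDiffAt
      (analyticAt_const.fun_mul hidSK).contDiffAt,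
    iteratedDeriv_const_mul_field, iteratedDeriv_const_mul_field,
    iteratedDeriv_succ_id_mul hSK] at hD
  rw [hD, iteratedDeriv_sin_mul_integral (by fun_prop) (ae_of_all _ fun u => Real.exp_nonneg _)
    one_pos hJint, iteratedDeriv_sin_mul_integral (by fun_prop) hKpos one_pos hKint]

lemma integral_mul_imPow_add {α : Type*} [MeasurableSpace α] {μ : Measure α} {w a b : α → ℝ}
    (m : ℕ) (h : ∀ j, Integrable (fun u => w u * imPow (m - j) (a u) * b u ^ j) μ) :
    ∫ u, w u * imPow m (a u + b u) ∂μ = ∫ u, w u * imPow m (a u) ∂μ +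
      ∑ k ∈ Finset.range m, (m.choose (k + 1) : ℝ) *
        ∫ u, w u * imPow (m - (k + 1)) (a u) * b u ^ (k + 1) ∂μ := by
  have hexp : (fun u => w u * imPow m (a u + b u)) = fun u => ∑ j ∈ Finset.range (m + 1),
      (m.choose j : ℝ) * (w u * imPow (m - j) (a u) * b u ^ j) := by
    funext u
    rw [imPow_add, Finset.mul_sum]
    exact Finset.sum_congr rfl fun j _ => by ring
  rw [hexp, integral_finsetSum _ fun j _ => (h j).const_mul _, Finset.sum_range_succ', add_comm]
  simp only [integral_const_mul, Nat.choose_zero_right, Nat.cast_one, one_mul, pow_zero, mul_one,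
    Nat.sub_zero]

lemma succ_mul_sum_choose_mul_integral_besselF (x : ℝ) (n : ℕ) :
    (n + 1) * ∑ k ∈ Finset.range n, (n.choose k : ℝ) * ∫ u in Set.Ioi (0:ℝ),
        Real.exp (-(x * u)) * (besselF n k (u + 1) / (2 * Real.pi * Complex.I)).re
          * (Real.log u) ^ (k + 1) / (k + 1)
      = ∑ k ∈ Finset.range (n + 1), ((n + 1).choose (k + 1) : ℝ) * ∫ u in Set.Ioi (0:ℝ),
          Real.exp (-(x * u)) * imPow (n + 1 - (k + 1)) (Real.log (u + 2))
            * Real.log u ^ (k + 1) := by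
  rw [Finset.sum_range_succ, Nat.sub_self, Finset.mul_sum]
  simp only [imPow_zero, mul_zero, zero_mul, integral_zero, add_zero]
  refine Finset.sum_congr rfl fun k _ => ?_
  have hchoose : ((n + 1 : ℝ)) * n.choose k = (n + 1).choose (k + 1) * (k + 1) := by
    exact_mod_cast Nat.add_one_mul_choose_eq n k
  simp only [re_besselF_div, add_assoc, one_add_one_eq_two, integral_div, Nat.add_sub_add_right]
  field_simp
  rw [hchoose]
  ring

lemma sum_choose_mul_integral_besselF_div (x : ℝ) (n : ℕ) :
    ∑ k ∈ Finset.range n, (n.choose k : ℝ) * ((n - k : ℕ) : ℝ) * ∫ u in Set.Ioi (0:ℝ),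
        Real.exp (-(x * u)) * (besselF (n - 1) k (u + 1) / (2 * Real.pi * Complex.I)).re
          * (Real.log u) ^ (k + 1) / ((k + 1) * (u + 2))
      = ∑ k ∈ Finset.range n, (n.choose (k + 1) : ℝ) * ∫ u in Set.Ioi (0:ℝ),
          Real.exp (-(x * u)) / (u + 2) * imPow (n - (k + 1)) (Real.log (u + 2))
            * Real.log u ^ (k + 1) := by
  refine Finset.sum_congr rfl fun k _ => ?_
  have hchoose : (n.choose k : ℝ) * ((n - k : ℕ) : ℝ) = n.choose (k + 1) * (k + 1) := by
    exact_mod_cast (Nat.choose_succ_right_eq n k).symm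
  rw [hchoose, mul_assoc, ← integral_const_mul]
  congr 2
  funext u
  rw [re_besselF_div, add_assoc, one_add_one_eq_two, Nat.sub_sub, add_comm 1 k]
  field_simp

theorem stmt3 (x : ℝ) (hx : 0 < x) (n : ℕ) (hn : 1 ≤ n) :
    iteratedDeriv n
        (fun s : ℝ => ∫ u in Set.Ioi (0:ℝ), Real.cos (x * u) / (u ^ 2 + 1) ^ (s + 1/2)) (1/2)
      = (-1) ^ n * ((Real.pi / 2) * Real.exp (-x)) *
        (((1 / (2 * Real.pi)) *
            ∫ φ in (-Real.pi)..Real.pi, (((Real.log 2 : ℂ) + φ * Complex.I) ^ n).re)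
          + (- ∫ u in Set.Ioi (0:ℝ),
                Real.exp (-(x * u)) * besselP n (Real.log (u + 2) + Real.log u) / (u + 2))
          + (x * ∑ k ∈ Finset.range n, (n.choose k : ℝ) *
              ∫ u in Set.Ioi (0:ℝ),
                Real.exp (-(x * u)) * (besselF n k (u + 1) / (2 * Real.pi * Complex.I)).re
                  * (Real.log u) ^ (k + 1) / (k + 1))
          + (- ∑ k ∈ Finset.range n, (n.choose k : ℝ) * ((n - k : ℕ) : ℝ) *
              ∫ u in Set.Ioi (0:ℝ),
                Real.exp (-(x * u)) * (besselF (n - 1) k (u + 1) / (2 * Real.pi * Complex.I)).re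
                  * (Real.log u) ^ (k + 1) / ((k + 1) * (u + 2)))) := by
  set e := Real.pi / 2 * Real.exp (-x)
  set F : ℝ → ℝ := fun ε => ∫ u in Set.Ioi (0:ℝ), Real.cos (x * u) * (u ^ 2 + 1) ^ (ε - 1) with hF
  have hcomp : (fun s : ℝ => ∫ u in Set.Ioi (0:ℝ), Real.cos (x * u) / (u ^ 2 + 1) ^ (s + 1/2))
      = fun s : ℝ => F (1/2 - s) := by
    funext s
    rw [hF]
    congr 1
    funext u
    rw [show (1/2 - s - 1 : ℝ) = -(s + 1/2) by ring, Real.rpow_neg (by positivity), div_eq_mul_inv]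
  rw [hcomp, iteratedDeriv_comp_const_sub]
  dsimp only
  rw [sub_self, smul_eq_mul, mul_assoc]
  congr 1
  have hInt (m k : ℕ) := integrableOn_exp_neg_mul_imPow_mul_log_pow hx m k
  have hdiv (m k : ℕ) : IntegrableOn (fun u : ℝ => Real.exp (-(x * u)) / (u + 2) *
      imPow m (Real.log (u + 2)) * Real.log u ^ k) (Set.Ioi 0) := by
    simp only [div_mul_eq_mul_div]
    exact integrableOn_div_add_two (hInt m k)
  have hD := iteratedDeriv_integral_cos hx n
  have hlog := imPow_log_two_eq hx n
  have hA3 := succ_mul_sum_choose_mul_integral_besselF x n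
  have hI1 := integral_mul_imPow_add (n + 1) fun j => hInt (n + 1 - j) j
  have hI2 := integral_mul_imPow_add n fun j => hdiv (n - j) j
  rw [sum_choose_mul_integral_besselF_div, integral_re_add_mul_I_pow]
  simp only [besselP_eq_imPow]
  simp only [mul_div_right_comm (Real.exp _) (imPow _ _)] at hlog ⊢
  have hn1 : (n + 1 : ℝ) ≠ 0 := by positivity
  refine mul_left_cancel₀ hn1 ?_
  rw [hD]
  linear_combination e * x * hI1 - e * (n + 1) * hI2 - e * hlog
    - e * mul_div_cancel₀ (imPow (n + 1) (Real.log 2)) hn1 - e * x * hA3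
end

section
/- For real x > 0, define F(s) = π^{−1/2} · (2/x)^{s} · Γ(s + 1/2) · ∫₀^∞ cos(x·u)/(u² + 1)^{s + 1/2} du for real s > −1/2. Then the derivative of F at s = 1/2 equals √(π/(2x)) · e^{−x} · ∫₀^∞ e^{−u}/(u + 2x) du. -/
open MeasureTheory Set

/-- The one-sided cosine transform of a Gaussian. -/
theorem integral_Ioi_cos_mul_exp_neg_mul_sq (x : ℝ) {b : ℝ} (hb : 0 < b) :
    ∫ u in Ioi (0 : ℝ), Real.cos (x * u) * Real.exp (-b * u ^ 2) =
      Real.sqrt (Real.pi / b) / 2 * Real.exp (-x ^ 2 / (4 * b)) := by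
  have h := integral_comp_abs (f := fun u => Real.cos (x * u) * Real.exp (-b * u ^ 2))
  have hc := fourierIntegral_gaussian (b := (b : ℂ)) (by simpa using hb) x
  have hre : ∫ u : ℝ, Real.cos (x * |u|) * Real.exp (-b * |u| ^ 2) =
      (∫ u : ℝ, Complex.exp (Complex.I * x * u) * Complex.exp (-b * u ^ 2)).re := by
    have hi : Integrable
        (fun u : ℝ => Complex.exp (Complex.I * x * u) * Complex.exp (-b * u ^ 2)) := by
      have := integrable_cexp_quadratic (b := (b : ℂ)) (by simpa using hb) (Complex.I * x) 0
      refine this.congr (.of_forall fun u => ?_)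
      simp only [← Complex.exp_add]
      congr 1
      ring
    have := integral_re hi
    simp only [RCLike.re_eq_complex_re] at this
    rw [← this]
    congr 1 with u
    have h1 : Complex.I * x * u = ((x * u : ℝ) : ℂ) * Complex.I := by push_cast; ring
    have h2 : (-b * u ^ 2 : ℂ) = ((-b * u ^ 2 : ℝ) : ℂ) := by push_cast; ring
    rw [h1, h2, ← Complex.ofReal_exp, Complex.re_mul_ofReal, Complex.exp_ofReal_mul_I_re, sq_abs]
    congr 1
    rcases abs_choice u with h | h <;> simp [h]
  have hval : ((Real.pi / b : ℂ) ^ (1 / 2 : ℂ) * Complex.exp (-x ^ 2 / (4 * b))) =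
      ((Real.sqrt (Real.pi / b) * Real.exp (-x ^ 2 / (4 * b)) : ℝ) : ℂ) := by
    rw [Real.sqrt_eq_rpow]
    push_cast
    rw [Complex.ofReal_cpow (by positivity)]
    push_cast
    rfl
  rw [hre, hc, hval, Complex.ofReal_re] at h
  linarith

/-- The Gamma integral for `(u² + 1) ^ (-p)`, with the variable scaled by `x / 2`. -/
theorem integral_Ioi_rpow_mul_exp_neg_mul_sq_add_one {x p : ℝ} (hx : 0 < x) (hp : 0 < p) (u : ℝ) :
    ∫ y in Ioi (0 : ℝ), y ^ (p - 1) * Real.exp (-(x / 2 * (u ^ 2 + 1) * y)) =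
      (2 / x) ^ p * Real.Gamma p / (u ^ 2 + 1) ^ p := by
  rw [Real.integral_rpow_mul_exp_neg_mul_Ioi hp (by positivity)]
  rw [show 1 / (x / 2 * (u ^ 2 + 1)) = (2 / x) / (u ^ 2 + 1) by field_simp,
    Real.div_rpow (by positivity) (by positivity)]
  ring

theorem integrableOn_rpow_mul_exp_neg_mul_s4 {p r : ℝ} (hp : 0 < p) (hr : 0 < r) :
    IntegrableOn (fun y : ℝ => y ^ (p - 1) * Real.exp (-(r * y))) (Ioi 0) := by
  refine (integrableOn_rpow_mul_exp_neg_mul_rpow (s := p - 1) (by linarith) one_pos hr).congr_fun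
    (fun y _ => ?_) measurableSet_Ioi
  simp

theorem integrable_cos_mul_rpow_mul_exp {x p : ℝ} (hx : 0 < x) (hp : 1 / 2 < p) :
    Integrable (Function.uncurry fun u y : ℝ =>
        Real.cos (x * u) * (y ^ (p - 1) * Real.exp (-(x / 2 * (u ^ 2 + 1) * y))))
      ((volume.restrict (Ioi 0)).prod (volume.restrict (Ioi 0))) := by
  have hp0 : 0 < p := by linarith
  have hmeas : Measurable (Function.uncurry fun u y : ℝ =>
      (y ^ (p - 1) * Real.exp (-(x / 2 * (u ^ 2 + 1) * y)))) := by
    simp only [Function.uncurry_def]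
    fun_prop
  have hpos : Integrable (Function.uncurry fun u y : ℝ =>
        y ^ (p - 1) * Real.exp (-(x / 2 * (u ^ 2 + 1) * y)))
      ((volume.restrict (Ioi 0)).prod (volume.restrict (Ioi 0))) := by
    rw [integrable_prod_iff hmeas.aestronglyMeasurable]
    refine ⟨.of_forall fun u =>
      integrableOn_rpow_mul_exp_neg_mul_s4 (r := x / 2 * (u ^ 2 + 1)) hp0 (by positivity), ?_⟩
    have hnorm (u : ℝ) : ∫ y in Ioi (0 : ℝ),
        ‖Function.uncurry (fun u y : ℝ =>
          y ^ (p - 1) * Real.exp (-(x / 2 * (u ^ 2 + 1) * y))) (u, y)‖ =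
        (2 / x) ^ p * Real.Gamma p * (1 + ‖u‖ ^ 2) ^ (-(2 * p) / 2) := by
      rw [show -(2 * p) / 2 = -p by ring, Real.rpow_neg (by positivity), ← div_eq_mul_inv,
        Real.norm_eq_abs, sq_abs, add_comm 1, ← integral_Ioi_rpow_mul_exp_neg_mul_sq_add_one hx hp0]
      refine setIntegral_congr_fun measurableSet_Ioi fun y hy => ?_
      have hy' : (0 : ℝ) < y := hy
      exact Real.norm_of_nonneg
        (mul_nonneg (Real.rpow_nonneg hy'.le _) (Real.exp_pos _).le)
    simp only [hnorm]
    exact ((integrable_rpow_neg_one_add_norm_sq (E := ℝ) (μ := volume)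
      (by simp; linarith)).const_mul _).restrict
  refine hpos.bdd_mul (c := 1) (f := fun z : ℝ × ℝ => Real.cos (x * z.1)) ?_
    (.of_forall fun z => Real.abs_cos_le_one _)
  exact Measurable.aestronglyMeasurable (by fun_prop)

theorem besselK_cos_eq_integral {x s : ℝ} (hx : 0 < x) (hs : 0 < s) :
    Real.pi ^ (-(1 : ℝ) / 2) * (2 / x) ^ s * Real.Gamma (s + 1 / 2) *
        ∫ u in Ioi (0 : ℝ), Real.cos (x * u) / (u ^ 2 + 1) ^ (s + 1 / 2) =
      1 / 2 * ∫ y in Ioi (0 : ℝ), y ^ (s - 1) * Real.exp (-(x / 2 * (y + 1 / y))) := by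
  have hswap := integral_integral_swap
    (integrable_cos_mul_rpow_mul_exp (p := s + 1 / 2) hx (by linarith))
  simp only [integral_const_mul,
    integral_Ioi_rpow_mul_exp_neg_mul_sq_add_one hx (show 0 < s + 1 / 2 by linarith)] at hswap
  have hl : ∫ u in Ioi (0 : ℝ), Real.cos (x * u) *
      ((2 / x) ^ (s + 1 / 2) * Real.Gamma (s + 1 / 2) / (u ^ 2 + 1) ^ (s + 1 / 2)) =
      (2 / x) ^ (s + 1 / 2) * Real.Gamma (s + 1 / 2) *
        ∫ u in Ioi (0 : ℝ), Real.cos (x * u) / (u ^ 2 + 1) ^ (s + 1 / 2) := by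
    rw [← integral_const_mul]
    congr 1 with u
    ring
  have hr : ∫ y in Ioi (0 : ℝ), ∫ u in Ioi (0 : ℝ), Real.cos (x * u) *
      (y ^ (s + 1 / 2 - 1) * Real.exp (-(x / 2 * (u ^ 2 + 1) * y))) =
      Real.sqrt Real.pi * (2 / x) ^ (1 / 2 : ℝ) *
        (1 / 2 * ∫ y in Ioi (0 : ℝ), y ^ (s - 1) * Real.exp (-(x / 2 * (y + 1 / y)))) := by
    rw [← integral_const_mul, ← integral_const_mul]
    refine setIntegral_congr_fun measurableSet_Ioi fun y hy => ?_
    have hy' : (0 : ℝ) < y := hy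
    have hg := integral_Ioi_cos_mul_exp_neg_mul_sq x (b := x / 2 * y) (by positivity)
    have he (u : ℝ) : Real.cos (x * u) *
        (y ^ (s + 1 / 2 - 1) * Real.exp (-(x / 2 * (u ^ 2 + 1) * y))) =
        y ^ (s + 1 / 2 - 1) * Real.exp (-(x / 2 * y)) *
          (Real.cos (x * u) * Real.exp (-(x / 2 * y) * u ^ 2)) := by
      rw [show -(x / 2 * (u ^ 2 + 1) * y) = -(x / 2 * y) + -(x / 2 * y) * u ^ 2 by ring,
        Real.exp_add]
      ring
    simp only [he, integral_const_mul, hg]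
    rw [show Real.pi / (x / 2 * y) = Real.pi * (2 / x) * y⁻¹ by field_simp,
      Real.sqrt_mul (by positivity), Real.sqrt_mul (by positivity), Real.sqrt_eq_rpow (2 / x),
      Real.sqrt_eq_rpow y⁻¹, Real.inv_rpow hy'.le, ← Real.rpow_neg hy'.le,
      show s - 1 = s + 1 / 2 - 1 + -(1 / 2) by ring, Real.rpow_add hy',
      show -(x / 2 * (y + 1 / y)) = -(x / 2 * y) + -x ^ 2 / (4 * (x / 2 * y)) by
        field_simp; ring, Real.exp_add]
    ring
  rw [hl, hr, Real.rpow_add (by positivity)] at hswap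
  rw [show -(1 : ℝ) / 2 = -(1 / 2) by ring, Real.rpow_neg Real.pi_pos.le, ← Real.sqrt_eq_rpow]
  have h1 : (0 : ℝ) < (2 / x) ^ (1 / 2 : ℝ) := by positivity
  have h2 : 0 < Real.sqrt Real.pi := by positivity
  rw [mul_assoc, mul_assoc, inv_mul_eq_iff_eq_mul₀ h2.ne']
  apply mul_left_cancel₀ h1.ne'
  linarith

theorem integrableOn_rpow_mul_exp_neg_mul_add_inv {x s : ℝ} (hx : 0 < x) (hs : 0 < s) :
    IntegrableOn (fun y : ℝ => y ^ (s - 1) * Real.exp (-(x / 2 * (y + 1 / y)))) (Ioi 0) := by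
  refine (integrableOn_rpow_mul_exp_neg_mul_s4 hs (half_pos hx)).mono'
    (Measurable.aestronglyMeasurable (by fun_prop)) ?_
  refine (ae_restrict_iff' measurableSet_Ioi).2 (.of_forall fun y hy => ?_)
  have hy' : (0 : ℝ) < y := hy
  have h1 : 0 < 1 / y := by positivity
  rw [Real.norm_of_nonneg (mul_nonneg (Real.rpow_nonneg hy'.le _) (Real.exp_pos _).le)]
  gcongr
  linarith

theorem hasDerivAt_exp_two_mul_arsinh (w : ℝ) :
    HasDerivAt (fun w => Real.exp (2 * Real.arsinh w))
      (Real.exp (2 * Real.arsinh w) * (2 * (Real.sqrt (1 + w ^ 2))⁻¹)) w :=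
  ((Real.hasDerivAt_arsinh w).const_mul 2).exp

theorem exp_two_mul_arsinh_injective :
    Function.Injective fun w => Real.exp (2 * Real.arsinh w) := fun a b h => by
  simpa using h

theorem image_exp_two_mul_arsinh :
    (fun w => Real.exp (2 * Real.arsinh w)) '' univ = Ioi 0 := by
  refine Subset.antisymm (image_subset_iff.2 fun w _ => Real.exp_pos _) fun y hy => ?_
  refine ⟨Real.sinh (Real.log y / 2), trivial, ?_⟩
  simp only [Real.arsinh_sinh]
  rw [mul_div_cancel₀ _ two_ne_zero, Real.exp_log hy]

/-- The Jacobian-weighted integrand produced by the substitution `y = exp (2 * arsinh w)`. -/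
theorem abs_deriv_smul_comp_exp_two_mul_arsinh (x s w : ℝ) :
    |Real.exp (2 * Real.arsinh w) * (2 * (Real.sqrt (1 + w ^ 2))⁻¹)| •
      (Real.exp (2 * Real.arsinh w) ^ (s - 1) * Real.exp (-(x / 2 *
        (Real.exp (2 * Real.arsinh w) + 1 / Real.exp (2 * Real.arsinh w))))) =
    2 * (Real.exp (-x) * Real.exp (-(2 * x) * w ^ 2) / Real.sqrt (1 + w ^ 2) *
      Real.exp (s * (2 * Real.arsinh w))) := by
  have hc : Real.exp (2 * Real.arsinh w) + 1 / Real.exp (2 * Real.arsinh w) = 2 + 4 * w ^ 2 := by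
    have h1 := Real.cosh_two_mul (Real.arsinh w)
    rw [Real.cosh_sq, Real.sinh_arsinh, Real.cosh_eq, Real.exp_neg] at h1
    rw [one_div]
    linarith
  rw [abs_of_pos (by positivity), hc, smul_eq_mul, ← Real.exp_mul,
    show -(x / 2 * (2 + 4 * w ^ 2)) = -x + -(2 * x) * w ^ 2 by ring, Real.exp_add,
    show s * (2 * Real.arsinh w) = 2 * Real.arsinh w + 2 * Real.arsinh w * (s - 1) by ring,
    Real.exp_add (2 * Real.arsinh w)]
  ring

theorem integral_rpow_mul_exp_eq_integral_arsinh (x s : ℝ) :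
    1 / 2 * ∫ y in Ioi (0 : ℝ), y ^ (s - 1) * Real.exp (-(x / 2 * (y + 1 / y))) =
      ∫ w : ℝ, Real.exp (-x) * Real.exp (-(2 * x) * w ^ 2) / Real.sqrt (1 + w ^ 2) *
        Real.exp (s * (2 * Real.arsinh w)) := by
  rw [← image_exp_two_mul_arsinh, integral_image_eq_integral_abs_deriv_smul MeasurableSet.univ
    (fun w _ => (hasDerivAt_exp_two_mul_arsinh w).hasDerivWithinAt)
    exp_two_mul_arsinh_injective.injOn]
  simp only [abs_deriv_smul_comp_exp_two_mul_arsinh, Measure.restrict_univ, integral_const_mul]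
  ring

theorem integrable_exp_mul_arsinh {x s : ℝ} (hx : 0 < x) (hs : 0 < s) :
    Integrable fun w : ℝ => Real.exp (-x) * Real.exp (-(2 * x) * w ^ 2) / Real.sqrt (1 + w ^ 2) *
        Real.exp (s * (2 * Real.arsinh w)) := by
  have h := integrableOn_rpow_mul_exp_neg_mul_add_inv hx hs
  rw [← image_exp_two_mul_arsinh, integrableOn_image_iff_integrableOn_abs_deriv_smul
    MeasurableSet.univ (fun w _ => (hasDerivAt_exp_two_mul_arsinh w).hasDerivWithinAt)
    exp_two_mul_arsinh_injective.injOn] at h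
  simp only [abs_deriv_smul_comp_exp_two_mul_arsinh, integrableOn_univ] at h
  simpa using h.const_mul (1 / 2)

/-- Differentiation under the integral sign for a density-weighted exponential family,
phrased through the moment generating function. -/
theorem hasDerivAt_integral_mul_exp_mul {ρ X : ℝ → ℝ} (hρ : Measurable ρ) (hρ0 : ∀ w, 0 ≤ ρ w)
    {U : Set ℝ} (hU : IsOpen U) (h : ∀ s ∈ U, Integrable fun w => ρ w * Real.exp (s * X w))
    {t : ℝ} (ht : t ∈ U) :
    Integrable (fun w => ρ w * (X w * Real.exp (t * X w))) ∧
    HasDerivAt (fun s => ∫ w, ρ w * Real.exp (s * X w))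
      (∫ w, ρ w * (X w * Real.exp (t * X w))) t := by
  have hρm : Measurable fun w => (ρ w).toNNReal := hρ.real_toNNReal
  set μ : Measure ℝ := volume.withDensity fun w => ((ρ w).toNNReal : ENNReal) with hμ
  have hsmul (g : ℝ → ℝ) (w : ℝ) : (ρ w).toNNReal • g w = ρ w * g w := by
    rw [NNReal.smul_def, Real.coe_toNNReal _ (hρ0 w), smul_eq_mul]
  have hint (g : ℝ → ℝ) : ∫ w, g w ∂μ = ∫ w, ρ w * g w := by
    rw [hμ, integral_withDensity_eq_integral_smul hρm]
    simp only [hsmul]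
  have hi (g : ℝ → ℝ) : Integrable g μ ↔ Integrable fun w => ρ w * g w := by
    rw [hμ, integrable_withDensity_iff_integrable_smul hρm]
    simp only [hsmul]
  have hmem : t ∈ interior (ProbabilityTheory.integrableExpSet X μ) :=
    interior_maximal (fun s hs => (hi _).2 (h s hs)) hU ht
  constructor
  · have := ProbabilityTheory.integrable_pow_mul_exp_of_mem_interior_integrableExpSet hmem 1
    simpa using (hi _).1 this
  · have := ProbabilityTheory.hasDerivAt_mgf hmem
    rw [hint] at this
    refine this.congr_of_eventuallyEq (.of_forall fun s => ?_)
    simp only [ProbabilityTheory.mgf, hint]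

theorem integral_mul_arsinh_eq {x : ℝ}
    (h : Integrable fun w : ℝ => Real.exp (-x) * Real.exp (-(2 * x) * w ^ 2) /
      Real.sqrt (1 + w ^ 2) * (2 * Real.arsinh w * Real.exp (1 / 2 * (2 * Real.arsinh w)))) :
    ∫ w : ℝ, Real.exp (-x) * Real.exp (-(2 * x) * w ^ 2) /
      Real.sqrt (1 + w ^ 2) * (2 * Real.arsinh w * Real.exp (1 / 2 * (2 * Real.arsinh w))) =
    4 * Real.exp (-x) * ∫ w in Ioi (0 : ℝ),
      w * Real.exp (-(2 * x) * w ^ 2) * (Real.arsinh w / Real.sqrt (1 + w ^ 2)) := by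
  set f : ℝ → ℝ := fun w => Real.exp (-x) * Real.exp (-(2 * x) * w ^ 2) /
      Real.sqrt (1 + w ^ 2) * (2 * Real.arsinh w * Real.exp (1 / 2 * (2 * Real.arsinh w))) with hf
  set g : ℝ → ℝ := fun w =>
    w * Real.exp (-(2 * x) * w ^ 2) * (Real.arsinh w / Real.sqrt (1 + w ^ 2)) with hg
  have hsum : ∫ w, (f w + f (-w)) = 2 * ∫ w, f w := by
    rw [integral_add h h.comp_neg, integral_neg_eq_self f]
    ring
  have hfg (w : ℝ) : f w + f (-w) = 4 * Real.exp (-x) * g |w| := by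
    have hgw : g |w| = g w := by
      rcases abs_choice w with h | h <;> rw [h]
      simp [hg, Real.arsinh_neg]
      ring
    rw [hgw]
    simp only [hf, hg, Real.arsinh_neg, neg_sq]
    have e1 : Real.exp (1 / 2 * (2 * Real.arsinh w)) = w + Real.sqrt (1 + w ^ 2) := by
      rw [← Real.exp_arsinh]; congr 1; ring
    have e2 : Real.exp (1 / 2 * (2 * -Real.arsinh w)) = -w + Real.sqrt (1 + w ^ 2) := by
      rw [← Real.arsinh_neg, ← neg_sq w, ← Real.exp_arsinh]; congr 1; ring
    rw [e1, e2]
    ring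
  simp only [hfg, integral_const_mul, integral_comp_abs] at hsum
  linarith

theorem integral_inv_one_add_sq_sub_sq {w : ℝ} (hw : 0 < w) :
    ∫ a in (0 : ℝ)..w, (1 + w ^ 2 - a ^ 2)⁻¹ = Real.arsinh w / Real.sqrt (1 + w ^ 2) := by
  set c := Real.sqrt (1 + w ^ 2) with hc
  have hc2 : c ^ 2 = 1 + w ^ 2 := Real.sq_sqrt (by positivity)
  have hc0 : 0 < c := by positivity
  have hwc : w < c := by nlinarith
  have hpos : ∀ a ∈ uIcc 0 w, 0 < c + a ∧ 0 < c - a := fun a ha => by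
    rw [uIcc_of_le hw.le] at ha
    constructor <;> linarith [ha.1, ha.2]
  rw [intervalIntegral.integral_eq_sub_of_hasDerivAt
    (f := fun a => (Real.log (c + a) - Real.log (c - a)) / (2 * c))]
  · have h : Real.log (c - w) = -Real.arsinh w := by
      rw [← Real.arsinh_neg, Real.arsinh, neg_sq, ← hc]
      congr 1
      ring
    have h' : Real.log (c + w) = Real.arsinh w := by
      rw [Real.arsinh, ← hc, add_comm]
    simp only [h, h', add_zero, sub_zero, sub_self, zero_div, sub_neg_eq_add]
    field_simp
    ring
  · intro a ha
    obtain ⟨h1, h2⟩ := hpos a ha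
    have := ((((hasDerivAt_id a).const_add c).log h1.ne').sub
      (((hasDerivAt_id a).const_sub c).log h2.ne')).div_const (2 * c)
    refine this.congr_deriv ?_
    rw [← hc2, show c ^ 2 - a ^ 2 = (c + a) * (c - a) by ring]
    simp only [id]
    field_simp
    ring
  · refine ContinuousOn.intervalIntegrable (ContinuousOn.inv₀ (by fun_prop) fun a ha => ?_)
    obtain ⟨h1, h2⟩ := hpos a ha
    rw [← hc2, show c ^ 2 - a ^ 2 = (c + a) * (c - a) by ring]
    positivity

theorem integral_Ioi_mul_exp_neg_mul_sq_div (x : ℝ) {a : ℝ} (ha : 0 < a) :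
    ∫ w in Ioi a, w * Real.exp (-(2 * x) * w ^ 2) * (1 + w ^ 2 - a ^ 2)⁻¹ =
      Real.exp (-(2 * x) * a ^ 2) *
        (1 / 2 * ∫ t in Ioi (0 : ℝ), Real.exp (-(2 * x * t)) / (1 + t)) := by
  have himg : (fun w : ℝ => w ^ 2 - a ^ 2) '' Ioi a = Ioi 0 := by
    ext t
    constructor
    · rintro ⟨w, hw, rfl⟩
      have hw' : a < w := hw
      simp only [mem_Ioi]
      nlinarith
    · intro ht
      have ht' : (0 : ℝ) < t := ht
      refine ⟨Real.sqrt (t + a ^ 2), Real.lt_sqrt_of_sq_lt (by linarith), ?_⟩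
      simp only
      rw [Real.sq_sqrt (by positivity)]
      ring
  have hinj : InjOn (fun w : ℝ => w ^ 2 - a ^ 2) (Ioi a) := fun u hu v hv h => by
    have hu' : a < u := hu
    have hv' : a < v := hv
    simp only [sub_left_inj] at h
    exact (sq_eq_sq₀ (by linarith) (by linarith)).1 h
  rw [← himg, integral_image_eq_integral_abs_deriv_smul (f' := fun w => 2 * w) measurableSet_Ioi
    (fun w _ => by simpa using ((hasDerivAt_pow 2 w).sub_const (a ^ 2)).hasDerivWithinAt) hinj,
    ← integral_const_mul, ← integral_const_mul]
  refine setIntegral_congr_fun measurableSet_Ioi fun w hw => ?_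
  have hw' : 0 < w := ha.trans hw
  simp only [smul_eq_mul]
  rw [abs_of_pos (by positivity),
    show -(2 * x) * w ^ 2 = -(2 * x) * a ^ 2 + -(2 * x * (w ^ 2 - a ^ 2)) by ring, Real.exp_add]
  ring

theorem integral_Ioi_mul_exp_mul_arsinh {x : ℝ} (hx : 0 < x) :
    ∫ w in Ioi (0 : ℝ),
      w * Real.exp (-(2 * x) * w ^ 2) * (Real.arsinh w / Real.sqrt (1 + w ^ 2)) =
    Real.sqrt (Real.pi / (2 * x)) / 2 *
      (1 / 2 * ∫ t in Ioi (0 : ℝ), Real.exp (-(2 * x * t)) / (1 + t)) := by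
  set k : ℝ → ℝ → ℝ := fun a w => (Ioi a).indicator
    (fun w => w * Real.exp (-(2 * x) * w ^ 2) * (1 + w ^ 2 - a ^ 2)⁻¹) w with hk
  have hk_uncurry : Function.uncurry k = {z : ℝ × ℝ | z.1 < z.2}.indicator
      (fun z => z.2 * Real.exp (-(2 * x) * z.2 ^ 2) * (1 + z.2 ^ 2 - z.1 ^ 2)⁻¹) := by
    ext ⟨a, w⟩
    simp [hk, Function.uncurry, indicator]
  have hmeas : Measurable (Function.uncurry k) := by
    rw [hk_uncurry]
    exact Measurable.indicator (by fun_prop) (measurableSet_lt measurable_fst measurable_snd)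
  have hnonneg : ∀ a > 0, ∀ w, 0 ≤ k a w := fun a ha w => by
    refine indicator_nonneg (fun w hw => ?_) w
    have hw' : a < w := hw
    have h0 : 0 < w := ha.trans hw'
    have : 0 < 1 + w ^ 2 - a ^ 2 := by nlinarith
    positivity
  have hinner : ∀ a > 0, ∫ w in Ioi (0 : ℝ), k a w = Real.exp (-(2 * x) * a ^ 2) *
      (1 / 2 * ∫ t in Ioi (0 : ℝ), Real.exp (-(2 * x * t)) / (1 + t)) := fun a ha => by
    rw [setIntegral_indicator measurableSet_Ioi,
      inter_eq_self_of_subset_right (Ioi_subset_Ioi ha.le), integral_Ioi_mul_exp_neg_mul_sq_div x ha]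
  have hk_int : Integrable (Function.uncurry k)
      ((volume.restrict (Ioi 0)).prod (volume.restrict (Ioi 0))) := by
    rw [integrable_prod_iff hmeas.aestronglyMeasurable]
    constructor
    · refine (ae_restrict_iff' measurableSet_Ioi).2 (.of_forall fun a ha => ?_)
      have ha' : (0 : ℝ) < a := ha
      refine (integrable_mul_exp_neg_mul_sq (b := 2 * x) (by positivity)).restrict.mono'
        (hmeas.comp measurable_prodMk_left).aestronglyMeasurable ?_
      refine (ae_restrict_iff' measurableSet_Ioi).2 (.of_forall fun w hw => ?_)
      have hw' : (0 : ℝ) < w := hw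
      change ‖k a w‖ ≤ _
      rw [Real.norm_of_nonneg (hnonneg a ha' w)]
      refine indicator_apply_le' (fun haw => ?_) fun _ => by positivity
      have haw' : a < w := haw
      exact mul_le_of_le_one_right (by positivity) (inv_le_one_of_one_le₀ (by nlinarith))
    · refine ((integrable_exp_neg_mul_sq (b := 2 * x) (by positivity)).restrict.mul_const
        (1 / 2 * ∫ t in Ioi (0 : ℝ), Real.exp (-(2 * x * t)) / (1 + t))).congr ?_
      refine (ae_restrict_iff' measurableSet_Ioi).2 (.of_forall fun a ha => ?_)
      simp only [← hinner a ha, Function.uncurry_apply_pair, Real.norm_of_nonneg (hnonneg a ha _)]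
  have hswap := integral_integral_swap hk_int
  rw [setIntegral_congr_fun measurableSet_Ioi hinner, integral_mul_const,
    integral_gaussian_Ioi] at hswap
  rw [hswap]
  refine setIntegral_congr_fun measurableSet_Ioi fun w hw => ?_
  have hw' : (0 : ℝ) < w := hw
  have hk' (a : ℝ) : k a w = (Iio w).indicator
      (fun a => w * Real.exp (-(2 * x) * w ^ 2) * (1 + w ^ 2 - a ^ 2)⁻¹) a := by
    simp [hk, indicator]
  simp only [hk']
  rw [setIntegral_indicator measurableSet_Iio, Ioi_inter_Iio, ← integral_Ioc_eq_integral_Ioo,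
    ← intervalIntegral.integral_of_le hw'.le, intervalIntegral.integral_const_mul,
    integral_inv_one_add_sq_sub_sq hw']

theorem integral_exp_neg_div_add {c : ℝ} (hc : 0 < c) :
    ∫ u in Ioi (0 : ℝ), Real.exp (-u) / (u + c) =
      ∫ t in Ioi (0 : ℝ), Real.exp (-(c * t)) / (1 + t) := by
  have h := integral_comp_mul_left_Ioi (fun u => Real.exp (-u) / (u + c)) 0 hc
  rw [mul_zero, smul_eq_mul, eq_inv_mul_iff_mul_eq₀ hc.ne', ← integral_const_mul] at h
  rw [← h]
  refine setIntegral_congr_fun measurableSet_Ioi fun t ht => ?_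
  have ht' : (0 : ℝ) < t := ht
  have : c * t + c = c * (1 + t) := by ring
  simp only [this]
  field_simp

theorem stmt4 (x : ℝ) (hx : 0 < x) :
    deriv (fun s : ℝ =>
        Real.pi ^ (-(1:ℝ)/2) * (2 / x) ^ s * Real.Gamma (s + 1/2) *
          ∫ u in Set.Ioi (0:ℝ), Real.cos (x * u) / (u ^ 2 + 1) ^ (s + 1/2)) (1/2)
      = Real.sqrt (Real.pi / (2 * x)) * Real.exp (-x)
          * ∫ u in Set.Ioi (0:ℝ), Real.exp (-u) / (u + 2 * x) := by
  have hexp := integral_exp_neg_div_add (c := 2 * x) (by positivity)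
  obtain ⟨hint, hderiv⟩ := hasDerivAt_integral_mul_exp_mul (X := fun w => 2 * Real.arsinh w)
    (ρ := fun w => Real.exp (-x) * Real.exp (-(2 * x) * w ^ 2) / Real.sqrt (1 + w ^ 2))
    (by fun_prop) (fun w => by positivity) isOpen_Ioi
    (fun s hs => integrable_exp_mul_arsinh hx hs) (show (1 / 2 : ℝ) ∈ Ioi 0 by norm_num)
  rw [(hderiv.congr_of_eventuallyEq ?_).deriv, integral_mul_arsinh_eq hint,
    integral_Ioi_mul_exp_mul_arsinh hx, hexp]
  · ring
  · filter_upwards [Ioi_mem_nhds (show (0 : ℝ) < 1 / 2 by norm_num)] with s hs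
    rw [besselK_cos_eq_integral hx hs, integral_rpow_mul_exp_eq_integral_arsinh]
end
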